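/- Let α be a countable ordinal, let f ∈ Den[a,b], and let F(x) = ∫_a^x f (the indefinite Denjoy integral). Then D_{f,F}^{α+1}([a,b]) = ∅ if and only if f ∈ Den_α[a,b]. -/

import Mathlib

open MeasureTheory Set Filter

noncomputable section

attribute [local instance] Classical.propDecidable

/-- The oscillation `ω(F, J)` of `F` on the set `J`. -/
def osc (F : ℝ → ℝ) (J : Set ℝ) : ℝ :=
  sSup {d : ℝ | ∃ x ∈ J, ∃ y ∈ J, d = |F x - F y|}

/-- `D` is a `K`-edged pre-partition of `[a,b]`: a finite nonempty collection of
pairwise non-overlapping closed subintervals of `[a,b]` whose endpoints lie in `K`. -/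
def IsPrePartition (a b : ℝ) (K : Set ℝ) (D : Finset (ℝ × ℝ)) : Prop :=
  D.Nonempty ∧
  (∀ p ∈ D, p.1 ≤ p.2 ∧ p.1 ∈ K ∧ p.2 ∈ K ∧ Icc p.1 p.2 ⊆ Icc a b) ∧
  (D : Set (ℝ × ℝ)).Pairwise fun p q => p.2 ≤ q.1 ∨ q.2 ≤ p.1

/-- `F ∈ AC_*(K)`: absolute continuity in the restricted sense on `K`. -/
def ACStar (a b : ℝ) (F : ℝ → ℝ) (K : Set ℝ) : Prop :=
  ∀ ε > (0:ℝ), ∃ δ > (0:ℝ), ∀ D : Finset (ℝ × ℝ), IsPrePartition a b K D →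
    (∑ p ∈ D, (p.2 - p.1)) < δ → (∑ p ∈ D, osc F (Icc p.1 p.2)) < ε

/-- `F ∈ ACG_*(K)`: `K` is a countable union of closed sets `Kₙ ⊆ [a,b]` with `F ∈ AC_*(Kₙ)`. -/
def ACGStar (a b : ℝ) (F : ℝ → ℝ) (K : Set ℝ) : Prop :=
  ∃ C : ℕ → Set ℝ, (∀ n, IsClosed (C n) ∧ C n ⊆ Icc a b ∧ ACStar a b F (C n)) ∧
    K = ⋃ n, C n

/-- `F` is the indefinite Denjoy integral of `f` on `[a,b]`:
`F` is continuous on `[a,b]`, `F(a) = 0`, `F ∈ ACG_*([a,b])`, and `F' = f` a.e. on `[a,b]`. -/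
def HasDenjoyIntegralFn (a b : ℝ) (f F : ℝ → ℝ) : Prop :=
  ContinuousOn F (Icc a b) ∧ F a = 0 ∧ ACGStar a b F (Icc a b) ∧
    ∀ᵐ x ∂(volume.restrict (Icc a b)), HasDerivAt F (f x) x

/-- `f ∈ Den[a,b]`: `f` is Denjoy integrable on `[a,b]`. -/
def DenjoyIntegrable (a b : ℝ) (f : ℝ → ℝ) : Prop :=
  ∃ F : ℝ → ℝ, HasDenjoyIntegralFn a b f F

/-- The Denjoy integral `∫_a^b f` (junk value `0` if `f` is not Denjoy integrable). -/
def denjoyIntegral (a b : ℝ) (f : ℝ → ℝ) : ℝ :=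
  if h : DenjoyIntegrable a b f then Classical.choose h b else 0

/-- The derivative `D_f(K)`: points of `K` at which `f` is not locally Lebesgue integrable
relative to `K`. -/
def Df (f : ℝ → ℝ) (K : Set ℝ) : Set ℝ :=
  {x ∈ K | ∀ c d : ℝ, c < x → x < d → ¬ IntegrableOn f (Icc c d ∩ K) volume}

/-- The derivative `D_F(K)`: points of `K` at which `F` is not locally `AC_*` relative to `K`. -/
def DF (a b : ℝ) (F : ℝ → ℝ) (K : Set ℝ) : Set ℝ :=
  {x ∈ K | ∀ c d : ℝ, c < x → x < d → ¬ ACStar a b F (Icc c d ∩ K)}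

/-- The derivative `D_{f,F}(K) = D_f(K) ∪ D_F(K)`. -/
def DfF (a b : ℝ) (f F : ℝ → ℝ) (K : Set ℝ) : Set ℝ := Df f K ∪ DF a b F K

/-- Transfinite iterates of a derivative operation on sets:
`D⁰(K) = K`, `D^(α+1)(K) = D(D^α(K))`, and `D^α(K) = ⋂_(β<α) D^β(K)` for limit `α`. -/
def derivIter (D : Set ℝ → Set ℝ) (K : Set ℝ) (α : Ordinal.{0}) : Set ℝ :=
  Ordinal.limitRecOn α K (fun _ ih => D ih) (fun o _ ih => ⋂ β : Iio o, ih β.1 β.2)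

/-- `D^∞(K) = ⋂_(α<ω₁) D^α(K)`. -/
def derivInfty (D : Set ℝ → Set ℝ) (K : Set ℝ) : Set ℝ :=
  ⋂ (α : Ordinal.{0}) (_ : α.card ≤ Cardinal.aleph0), derivIter D K α

/-- `Lim(X)`: the improper integrals of `X`. -/
def LimSet (a b : ℝ) (X : Set (ℝ → ℝ)) : Set (ℝ → ℝ) :=
  {f | ∃ A B : ℕ → ℝ,
    (∀ n, a ≤ A n ∧ B n ≤ b ∧ A (n+1) ≤ A n ∧ B n ≤ B (n+1)) ∧
    (⋃ n, Ioo (A n) (B n)) = Ioo a b ∧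
    (∀ n, A n < B n → (Ioo (A n) (B n)).indicator f ∈ X) ∧
    (∃ L, Tendsto (fun c => denjoyIntegral c (B 0) f) (nhdsWithin a (Ioi a)) (nhds L)) ∧
    (∃ L, Tendsto (fun c => denjoyIntegral (A 0) c f) (nhdsWithin b (Iio b)) (nhds L))}

/-- `Step(X)`: the functions given by the Step Lemma from `X`. -/
def StepSet (a b : ℝ) (X : Set (ℝ → ℝ)) : Set (ℝ → ℝ) :=
  {f | ∃ K : Set ℝ, IsClosed K ∧ K ⊆ Icc a b ∧
    ∃ c d : ℕ → ℝ, (∀ n, c n ≤ d n) ∧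
      (Pairwise fun m n => Disjoint (Ioo (c m) (d m)) (Ioo (c n) (d n))) ∧
      (⋃ n, Ioo (c n) (d n)) = Ioo a b \ K ∧
      IntegrableOn f K volume ∧
      (∀ n, c n < d n → (Ioo (c n) (d n)).indicator f ∈ X) ∧
      ∃ F : ℝ → ℝ, HasDenjoyIntegralFn a b f F ∧ ACStar a b F K}

/-- The hierarchy `Den_α[a,b]`: `Den₀ = L¹[a,b]` and
`Den_α = Step(Lim(⋃_(β<α) Den_β))` for `α > 0`. -/
def DenLevel (a b : ℝ) : Ordinal.{0} → Set (ℝ → ℝ) :=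
  Ordinal.lt_wf.fix fun α ih =>
    if α = 0 then {f | IntegrableOn f (Icc a b) volume}
    else StepSet a b (LimSet a b (⋃ β : Iio α, ih β.1 β.2))

/-! ### Oscillation -/

lemma osc_nonneg (F : ℝ → ℝ) (J : Set ℝ) : 0 ≤ osc F J := by
  apply Real.sSup_nonneg
  rintro d ⟨x, -, y, -, rfl⟩
  exact abs_nonneg _

lemma osc_le {F : ℝ → ℝ} {J : Set ℝ} {C : ℝ} (hC : 0 ≤ C)
    (h : ∀ x ∈ J, ∀ y ∈ J, |F x - F y| ≤ C) : osc F J ≤ C := by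
  apply Real.sSup_le _ hC
  rintro d ⟨x, hx, y, hy, rfl⟩
  exact h x hx y hy

lemma osc_bdd {F : ℝ → ℝ} {p q : ℝ} (hF : ContinuousOn F (Icc p q)) :
    BddAbove {d : ℝ | ∃ x ∈ Icc p q, ∃ y ∈ Icc p q, d = |F x - F y|} := by
  obtain ⟨C, hC⟩ := isCompact_Icc.exists_bound_of_continuousOn hF
  refine ⟨C + C, ?_⟩
  rintro d ⟨x, hx, y, hy, rfl⟩
  have h1 := hC x hx
  have h2 := hC y hy
  rw [Real.norm_eq_abs] at h1 h2
  exact (abs_sub _ _).trans (add_le_add h1 h2)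

lemma abs_le_osc {F : ℝ → ℝ} {p q x y : ℝ} (hF : ContinuousOn F (Icc p q))
    (hx : x ∈ Icc p q) (hy : y ∈ Icc p q) : |F x - F y| ≤ osc F (Icc p q) :=
  le_csSup (osc_bdd hF) ⟨x, hx, y, hy, rfl⟩

lemma osc_mono {F : ℝ → ℝ} {p q p' q' : ℝ} (hF : ContinuousOn F (Icc p q))
    (hp : p ≤ p') (hq : q' ≤ q) : osc F (Icc p' q') ≤ osc F (Icc p q) := by
  apply osc_le (osc_nonneg _ _)
  intro x hx y hy
  exact abs_le_osc hF ⟨hp.trans hx.1, hx.2.trans hq⟩ ⟨hp.trans hy.1, hy.2.trans hq⟩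

lemma osc_self (F : ℝ → ℝ) (p : ℝ) : osc F (Icc p p) = 0 := by
  apply le_antisymm _ (osc_nonneg _ _)
  apply osc_le le_rfl
  intro x hx y hy
  rw [Icc_self, mem_singleton_iff] at hx hy
  simp [hx, hy]

lemma osc_add {F : ℝ → ℝ} {p r q : ℝ} (hF : ContinuousOn F (Icc p q))
    (hpr : p ≤ r) (hrq : r ≤ q) :
    osc F (Icc p q) ≤ osc F (Icc p r) + osc F (Icc r q) := by
  have h1 : ContinuousOn F (Icc p r) := hF.mono (Icc_subset_Icc le_rfl hrq)
  have h2 : ContinuousOn F (Icc r q) := hF.mono (Icc_subset_Icc hpr le_rfl)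
  have n1 := osc_nonneg F (Icc p r)
  have n2 := osc_nonneg F (Icc r q)
  apply osc_le (by linarith)
  have key : ∀ x ∈ Icc p q, ∀ y ∈ Icc p q, x ≤ y →
      |F x - F y| ≤ osc F (Icc p r) + osc F (Icc r q) := by
    intro x hx y hy hxy
    rcases le_total y r with hyr | hyr
    · have := abs_le_osc h1 (x := x) (y := y) ⟨hx.1, hxy.trans hyr⟩ ⟨hy.1, hyr⟩
      linarith
    · rcases le_total r x with hxr | hxr
      · have := abs_le_osc h2 (x := x) (y := y) ⟨hxr, hx.2⟩ ⟨hyr, hy.2⟩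
        linarith
      · have a1 := abs_le_osc h1 (x := x) (y := r) ⟨hx.1, hxr⟩ ⟨hpr, le_rfl⟩
        have a2 := abs_le_osc h2 (x := r) (y := y) ⟨le_rfl, hrq⟩ ⟨hyr, hy.2⟩
        have := abs_sub_le (F x) (F r) (F y)
        linarith
  intro x hx y hy
  rcases le_total x y with h | h
  · exact key x hx y hy h
  · rw [abs_sub_comm]; exact key y hy x hx h

lemma osc_congr {F G : ℝ → ℝ} {J : Set ℝ} (h : ∀ x ∈ J, ∀ y ∈ J, F x - F y = G x - G y) :
    osc F J = osc G J := by
  unfold osc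
  congr 1
  ext d
  constructor
  · rintro ⟨x, hx, y, hy, rfl⟩
    exact ⟨x, hx, y, hy, by rw [h x hx y hy]⟩
  · rintro ⟨x, hx, y, hy, rfl⟩
    exact ⟨x, hx, y, hy, by rw [h x hx y hy]⟩

/-! ### Basic facts on `ACStar` -/

/-- Families of possibly degenerate intervals. -/
lemma ACStar.family {a b : ℝ} {F : ℝ → ℝ} {K : Set ℝ} (h : ACStar a b F K) {ε : ℝ} (hε : 0 < ε) :
    ∃ δ > (0:ℝ), ∀ (ι : Type) (s : Finset ι) (l r : ι → ℝ),
      (∀ i ∈ s, l i ≤ r i ∧ l i ∈ K ∧ r i ∈ K ∧ a ≤ l i ∧ r i ≤ b) →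
      (∀ i ∈ s, ∀ j ∈ s, i ≠ j → r i ≤ l j ∨ r j ≤ l i) →
      (∑ i ∈ s, (r i - l i)) < δ → (∑ i ∈ s, osc F (Icc (l i) (r i))) < ε := by
  obtain ⟨δ, hδ, H⟩ := h ε hε
  refine ⟨δ, hδ, ?_⟩
  intro ι s l r h1 h2 h3
  rcases s.eq_empty_or_nonempty with rfl | hs
  · simpa using hε
  have hdeg : ∀ i ∈ s, ∀ j ∈ s, i ≠ j → (l i, r i) = (l j, r j) → l i = r i := by
    intro i hi j hj hij he
    rw [Prod.mk.injEq] at he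
    have a1 := (h1 i hi).1
    have a2 := (h1 j hj).1
    rcases h2 i hi j hj hij with h | h <;> linarith [he.1, he.2]
  have e1 : ∑ p ∈ s.image (fun i => (l i, r i)), (p.2 - p.1) = ∑ i ∈ s, (r i - l i) := by
    rw [Finset.sum_image_of_pairwise_eq_zero]
    intro i hi j hj hij he
    have := hdeg i hi j hj hij he
    simp [this]
  have e2 : ∑ p ∈ s.image (fun i => (l i, r i)), osc F (Icc p.1 p.2)
      = ∑ i ∈ s, osc F (Icc (l i) (r i)) := by
    rw [Finset.sum_image_of_pairwise_eq_zero]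
    intro i hi j hj hij he
    have := hdeg i hi j hj hij he
    simp only [this]
    exact osc_self _ _
  rw [← e2]
  apply H
  · refine ⟨hs.image _, ?_, ?_⟩
    · intro p hp
      obtain ⟨i, hi, rfl⟩ := Finset.mem_image.1 hp
      obtain ⟨q1, q2, q3, q4, q5⟩ := h1 i hi
      exact ⟨q1, q2, q3, Icc_subset_Icc q4 q5⟩
    · intro p hp q hq hpq
      obtain ⟨i, hi, rfl⟩ := Finset.mem_image.1 (Finset.mem_coe.1 hp)
      obtain ⟨j, hj, rfl⟩ := Finset.mem_image.1 (Finset.mem_coe.1 hq)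
      exact h2 i hi j hj (by rintro rfl; exact hpq rfl)
  · rw [e1]; exact h3

lemma IsPrePartition.bounds {a b : ℝ} {K : Set ℝ} {D : Finset (ℝ × ℝ)}
    (h : IsPrePartition a b K D) {p : ℝ × ℝ} (hp : p ∈ D) :
    p.1 ≤ p.2 ∧ p.1 ∈ K ∧ p.2 ∈ K ∧ a ≤ p.1 ∧ p.2 ≤ b := by
  obtain ⟨h1, h2, h3, h4⟩ := h.2.1 p hp
  exact ⟨h1, h2, h3, (h4 (left_mem_Icc.2 h1)).1, (h4 (right_mem_Icc.2 h1)).2⟩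

lemma ACStar.mono_osc {a b : ℝ} {F G : ℝ → ℝ} {K L : Set ℝ} (h : ACStar a b F L)
    (hKL : K ∩ Icc a b ⊆ L) (ho : ∀ p q, a ≤ p → p ≤ q → q ≤ b → p ∈ K → q ∈ K →
      osc G (Icc p q) ≤ osc F (Icc p q)) :
    ACStar a b G K := by
  intro ε hε
  obtain ⟨δ, hδ, H⟩ := h ε hε
  refine ⟨δ, hδ, fun D hD hlen => ?_⟩
  refine lt_of_le_of_lt (Finset.sum_le_sum fun p hp => ?_) (H D ⟨hD.1, fun p hp => ?_, hD.2.2⟩ hlen)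
  · obtain ⟨h1, h2, h3, h4, h5⟩ := hD.bounds hp
    exact ho _ _ h4 h1 h5 h2 h3
  · obtain ⟨h1, h2, h3, h4, h5⟩ := hD.bounds hp
    exact ⟨h1, hKL ⟨h2, h4, h1.trans h5⟩, hKL ⟨h3, h4.trans h1, h5⟩, Icc_subset_Icc h4 h5⟩

lemma ACStar.mono {a b : ℝ} {F : ℝ → ℝ} {K L : Set ℝ} (h : ACStar a b F L)
    (hKL : K ⊆ L) : ACStar a b F K :=
  h.mono_osc (inter_subset_left.trans hKL) fun _ _ _ _ _ _ _ => le_rfl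

lemma ACStar.congr_sub {a b : ℝ} {F G : ℝ → ℝ} {K : Set ℝ} (h : ACStar a b F K)
    (hFG : ∀ x ∈ Icc a b, ∀ y ∈ Icc a b, G x - G y = F x - F y) : ACStar a b G K :=
  h.mono_osc inter_subset_left fun p q hp _ hq _ _ => le_of_eq <| osc_congr fun x hx y hy =>
    hFG x ⟨hp.trans hx.1, hx.2.trans hq⟩ y ⟨hp.trans hy.1, hy.2.trans hq⟩

lemma ACStar.shrink {a b c d : ℝ} {F : ℝ → ℝ} {K : Set ℝ} (h : ACStar a b F K)
    (hac : a ≤ c) (hdb : d ≤ b) : ACStar c d F K := by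
  intro ε hε
  obtain ⟨δ, hδ, H⟩ := h ε hε
  refine ⟨δ, hδ, fun D hD hlen => H D ⟨hD.1, fun p hp => ?_, hD.2.2⟩ hlen⟩
  obtain ⟨h1, h2, h3, h4⟩ := hD.2.1 p hp
  exact ⟨h1, h2, h3, h4.trans (Icc_subset_Icc hac hdb)⟩

lemma ACStar.sub {a b : ℝ} {F G : ℝ → ℝ} {K : Set ℝ} (hFc : ContinuousOn F (Icc a b))
    (hGc : ContinuousOn G (Icc a b)) (hF : ACStar a b F K) (hG : ACStar a b G K) :
    ACStar a b (fun x => F x - G x) K := by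
  intro ε hε
  obtain ⟨δ, hδ, H⟩ := hF (ε/2) (half_pos hε)
  obtain ⟨δ', hδ', H'⟩ := hG (ε/2) (half_pos hε)
  refine ⟨min δ δ', lt_min hδ hδ', fun D hD hlen => ?_⟩
  have h1 := H D hD (hlen.trans_le (min_le_left _ _))
  have h2 := H' D hD (hlen.trans_le (min_le_right _ _))
  have : ∑ p ∈ D, osc (fun x => F x - G x) (Icc p.1 p.2)
      ≤ ∑ p ∈ D, (osc F (Icc p.1 p.2) + osc G (Icc p.1 p.2)) := by
    refine Finset.sum_le_sum fun p hp => ?_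
    obtain ⟨h1, h2, h3, h4, h5⟩ := hD.bounds hp
    have c1 := hFc.mono (Icc_subset_Icc h4 h5)
    have c2 := hGc.mono (Icc_subset_Icc h4 h5)
    apply osc_le (add_nonneg (osc_nonneg _ _) (osc_nonneg _ _))
    intro x hx y hy
    have e1 := abs_le_osc c1 hx hy
    have e2 := abs_le_osc c2 hx hy
    have : F x - G x - (F y - G y) = (F x - F y) - (G x - G y) := by ring
    rw [this]
    exact (abs_sub _ _).trans (add_le_add e1 e2)
  rw [Finset.sum_add_distrib] at this
  linarith

/-! ### Components of bounded open sets -/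

lemma exists_gaps {a b : ℝ} {U : Set ℝ} (hU : IsOpen U) (hUb : U ⊆ Icc a b) :
    ∃ c d : ℕ → ℝ, (∀ n, c n ≤ d n) ∧
      (Pairwise fun m n => Disjoint (Ioo (c m) (d m)) (Ioo (c n) (d n))) ∧
      (⋃ n, Ioo (c n) (d n)) = U ∧ (∀ n, c n < d n → c n ∉ U ∧ d n ∉ U) := by
  set l : ℝ → ℝ := fun x => sSup (Uᶜ ∩ Iic x) with hl
  set r : ℝ → ℝ := fun x => sInf (Uᶜ ∩ Ici x) with hr
  have hlm : ∀ x, l x ∈ Uᶜ ∩ Iic x := by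
    intro x
    apply (hU.isClosed_compl.inter isClosed_Iic).csSup_mem
    · refine ⟨min x (a - 1), ?_, mem_Iic.2 (min_le_left _ _)⟩
      intro h
      have := (hUb h).1
      have h' := min_le_right x (a-1)
      linarith
    · exact ⟨x, fun y hy => hy.2⟩
  have hrm : ∀ x, r x ∈ Uᶜ ∩ Ici x := by
    intro x
    apply (hU.isClosed_compl.inter isClosed_Ici).csInf_mem
    · refine ⟨max x (b + 1), ?_, mem_Ici.2 (le_max_left _ _)⟩
      intro h
      have := (hUb h).2
      have h' := le_max_right x (b+1)
      linarith
    · exact ⟨x, fun y hy => hy.2⟩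
  have hlt : ∀ x ∈ U, l x < x := fun x hx =>
    lt_of_le_of_ne (hlm x).2 fun h => (hlm x).1 (by rw [h]; exact hx)
  have hrt : ∀ x ∈ U, x < r x := fun x hx =>
    lt_of_le_of_ne (hrm x).2 fun h => (hrm x).1 (by rw [← h]; exact hx)
  have hsub : ∀ x, Ioo (l x) (r x) ⊆ U := by
    intro x y hy
    by_contra hyU
    rcases le_total y x with h | h
    · have : y ≤ l x := le_csSup ⟨x, fun y hy => hy.2⟩ ⟨hyU, h⟩
      exact absurd hy.1 (not_lt.2 this)
    · have : r x ≤ y := csInf_le ⟨x, fun y hy => hy.2⟩ ⟨hyU, h⟩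
      exact absurd hy.2 (not_lt.2 this)
  have heq : ∀ x y z, z ∈ Ioo (l x) (r x) → z ∈ Ioo (l y) (r y) → l x = l y ∧ r x = r y := by
    intro x y z hx hy
    constructor
    · apply le_antisymm
      · by_contra! h
        exact (hlm x).1 (hsub y ⟨h, hx.1.trans hy.2⟩)
      · by_contra! h
        exact (hlm y).1 (hsub x ⟨h, hy.1.trans hx.2⟩)
    · apply le_antisymm
      · by_contra! h
        exact (hrm y).1 (hsub x ⟨hx.1.trans hy.2, h⟩)
      · by_contra! h
        exact (hrm x).1 (hsub y ⟨hy.1.trans hx.2, h⟩)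
  obtain ⟨e, he⟩ := exists_surjective_nat ℚ
  set P : ℕ → Prop := fun n => (e n : ℝ) ∈ U ∧ ∀ m < n, (e m : ℝ) ∈ U → l (e m) ≠ l (e n) with hP
  refine ⟨fun n => if P n then l (e n) else 0, fun n => if P n then r (e n) else 0, ?_, ?_, ?_, ?_⟩
  · intro n
    by_cases h : P n
    · simp only [h, if_true]
      exact ((hlt _ h.1).trans (hrt _ h.1)).le
    · simp [h]
  · have key : ∀ m n, m < n → Disjoint (Ioo (if P m then l (e m) else 0) (if P m then r (e m) else 0))
        (Ioo (if P n then l (e n) else 0) (if P n then r (e n) else 0)) := by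
      intro m n hmn
      by_cases h : P m
      · by_cases h' : P n
        · simp only [h, h', if_true]
          rw [Set.disjoint_left]
          intro z hz hz'
          exact h'.2 m hmn h.1 (heq _ _ z hz hz').1
        · simp [h']
      · simp [h]
    intro m n hmn
    rcases lt_or_gt_of_ne hmn with h | h
    · exact key m n h
    · exact (key n m h).symm
  · ext x
    simp only [mem_iUnion]
    constructor
    · rintro ⟨n, hn⟩
      by_cases h : P n
      · simp only [h, if_true] at hn
        exact hsub _ hn
      · simp [h] at hn
    · intro hx
      obtain ⟨q, hq1, hq2⟩ := exists_rat_btwn ((hlt x hx).trans (hrt x hx))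
      obtain ⟨n, rfl⟩ := he q
      have hqU : ((e n : ℚ) : ℝ) ∈ U := hsub x ⟨hq1, hq2⟩
      have hex : ∃ n, (e n : ℝ) ∈ U ∧ l (e n) = l x :=
        ⟨n, hqU, (heq _ _ _ ⟨hlt _ hqU, hrt _ hqU⟩ ⟨hq1, hq2⟩).1⟩
      have hN := Nat.find_spec hex
      refine ⟨Nat.find hex, ?_⟩
      have hPN : P (Nat.find hex) := by
        refine ⟨hN.1, fun m hm hmU hml => Nat.find_min hex hm ⟨hmU, hml.trans hN.2⟩⟩
      simp only [hPN, if_true]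
      set w : ℝ := ((e (Nat.find hex) : ℚ) : ℝ) with hw
      have h1 : l w < min w x := lt_min (hlt _ hN.1) (hN.2 ▸ hlt x hx)
      obtain ⟨z, hz1, hz2⟩ := exists_between h1
      have := heq w x z ⟨hz1, (hz2.trans_le (min_le_left _ _)).trans (hrt _ hN.1)⟩
        ⟨hN.2 ▸ hz1, (hz2.trans_le (min_le_right _ _)).trans (hrt _ hx)⟩
      exact ⟨this.1 ▸ hlt x hx, this.2 ▸ hrt x hx⟩
  · intro n
    by_cases h : P n
    · simp only [h, if_true]
      exact fun _ => ⟨(hlm _).1, (hrm _).1⟩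
    · simp [h]

lemma gap_order {c d c' d' : ℝ} (h : c < d) (h' : c' < d')
    (hd : Disjoint (Ioo c d) (Ioo c' d')) : d ≤ c' ∨ d' ≤ c := by
  by_contra! hh
  have : max c c' < min d d' := max_lt (lt_min h hh.2) (lt_min hh.1 h')
  obtain ⟨z, hz1, hz2⟩ := exists_between this
  rw [max_lt_iff] at hz1
  rw [lt_min_iff] at hz2
  exact Set.disjoint_left.1 hd ⟨hz1.1, hz2.1⟩ ⟨hz1.2, hz2.2⟩
/-! ### Lusin's condition and uniqueness of the Denjoy integral -/

lemma sum_gap_le {c d : ℕ → ℝ} (hcd : ∀ n, c n ≤ d n)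
    (hdisj : Pairwise fun m n => Disjoint (Ioo (c m) (d m)) (Ioo (c n) (d n)))
    {U : Set ℝ} (hU : (⋃ n, Ioo (c n) (d n)) ⊆ U) (s : Finset ℕ) :
    ENNReal.ofReal (∑ n ∈ s, (d n - c n)) ≤ volume U := by
  rw [ENNReal.ofReal_sum_of_nonneg fun n _ => sub_nonneg.2 (hcd n)]
  have : ∑ n ∈ s, ENNReal.ofReal (d n - c n) = volume (⋃ n ∈ s, Ioo (c n) (d n)) := by
    rw [measure_biUnion_finset (fun m _ n _ hmn => hdisj hmn) fun n _ => measurableSet_Ioo]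
    simp
  rw [this]
  exact measure_mono ((iUnion₂_subset fun n _ => subset_iUnion (fun n => Ioo (c n) (d n)) n).trans hU)

lemma volume_image_le_osc {F : ℝ → ℝ} {l r : ℝ} (hF : ContinuousOn F (Icc l r)) {S : Set ℝ}
    (hS : S ⊆ Icc l r) : volume (F '' S) ≤ ENNReal.ofReal (osc F (Icc l r)) := by
  refine (Real.volume_le_diam _).trans ?_
  apply Metric.ediam_le
  rintro _ ⟨x, hx, rfl⟩ _ ⟨y, hy, rfl⟩
  rw [edist_dist, Real.dist_eq]
  exact ENNReal.ofReal_le_ofReal (abs_le_osc hF (hS hx) (hS hy))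

lemma ACStar.lusin {a b : ℝ} {F : ℝ → ℝ} {C E : Set ℝ} (hFc : ContinuousOn F (Icc a b))
    (hC : IsClosed C) (hCab : C ⊆ Icc a b) (h : ACStar a b F C) (hE : E ⊆ C)
    (hE0 : volume E = 0) : volume (F '' E) = 0 := by
  apply le_antisymm _ zero_le
  apply ENNReal.le_of_forall_pos_le_add
  intro ε hε _
  rw [zero_add]
  obtain ⟨δ, hδ, H⟩ := h.family (ε := ε) (by exact_mod_cast hε)
  obtain ⟨U, hEU, hUo, hU⟩ := E.exists_isOpen_lt_of_lt (μ := volume) (ENNReal.ofReal δ)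
    (by rw [hE0]; exact ENNReal.ofReal_pos.2 hδ)
  set V := U ∩ Ioo (a - 1) (b + 1) with hV
  have hVo : IsOpen V := hUo.inter isOpen_Ioo
  have hEV : E ⊆ V := fun x hx => ⟨hEU hx, by
    have := hCab (hE hx)
    exact ⟨by linarith [this.1], by linarith [this.2]⟩⟩
  obtain ⟨c, d, hcd, hdisj, hun, -⟩ := exists_gaps hVo
    (fun x hx => Ioo_subset_Icc_self hx.2 : V ⊆ Icc (a-1) (b+1))
  set En : ℕ → Set ℝ := fun n => E ∩ Ioo (c n) (d n) with hEn
  have hbb : ∀ n, BddBelow (En n) := fun n => ⟨c n, fun x hx => hx.2.1.le⟩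
  have hba : ∀ n, BddAbove (En n) := fun n => ⟨d n, fun x hx => hx.2.2.le⟩
  set l : ℕ → ℝ := fun n => sInf (En n)
  set r : ℕ → ℝ := fun n => sSup (En n)
  have hsub : ∀ n, En n ⊆ Icc (l n) (r n) := fun n x hx => ⟨csInf_le (hbb n) hx, le_csSup (hba n) hx⟩
  have hprop : ∀ n, (En n).Nonempty → l n ≤ r n ∧ l n ∈ C ∧ r n ∈ C ∧ c n ≤ l n ∧ r n ≤ d n := by
    intro n hn
    refine ⟨?_, ?_, ?_, ?_, ?_⟩
    · obtain ⟨x, hx⟩ := hn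
      exact (hsub n hx).1.trans (hsub n hx).2
    · exact closure_minimal (fun x hx => hE hx.1) hC (csInf_mem_closure hn (hbb n))
    · exact closure_minimal (fun x hx => hE hx.1) hC (csSup_mem_closure hn (hba n))
    · exact le_csInf hn fun x hx => hx.2.1.le
    · exact csSup_le hn fun x hx => hx.2.2.le
  have hcover : F '' E ⊆ ⋃ n, F '' (En n) := by
    rintro _ ⟨x, hx, rfl⟩
    have hxV := hEV hx
    rw [← hun] at hxV
    obtain ⟨n, hn⟩ := mem_iUnion.1 hxV
    exact mem_iUnion.2 ⟨n, x, ⟨hx, hn⟩, rfl⟩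
  refine (measure_mono hcover).trans ((measure_iUnion_le _).trans ?_)
  rw [ENNReal.tsum_eq_iSup_sum]
  refine iSup_le fun s => ?_
  have e1 : ∑ n ∈ s, volume (F '' (En n)) = ∑ n ∈ s.filter (fun n => (En n).Nonempty),
      volume (F '' (En n)) := by
    rw [Finset.sum_filter_of_ne]
    intro n hn hne
    by_contra hh
    rw [Set.not_nonempty_iff_eq_empty] at hh
    rw [hh] at hne
    simp at hne
  rw [e1]
  calc ∑ n ∈ s.filter (fun n => (En n).Nonempty), volume (F '' (En n))
      ≤ ∑ n ∈ s.filter (fun n => (En n).Nonempty), ENNReal.ofReal (osc F (Icc (l n) (r n))) := by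
        refine Finset.sum_le_sum fun n hn => ?_
        obtain ⟨h1, h2, h3, h4, h5⟩ := hprop n (Finset.mem_filter.1 hn).2
        exact volume_image_le_osc (hFc.mono (Icc_subset_Icc (hCab h2).1 (hCab h3).2)) (hsub n)
    _ = ENNReal.ofReal (∑ n ∈ s.filter (fun n => (En n).Nonempty), osc F (Icc (l n) (r n))) := by
        rw [ENNReal.ofReal_sum_of_nonneg fun n _ => osc_nonneg _ _]
    _ ≤ ε := by
        rw [ENNReal.ofReal_le_iff_le_toReal (by simp)]
        apply le_of_lt
        apply H
        · intro n hn
          obtain ⟨h1, h2, h3, h4, h5⟩ := hprop n (Finset.mem_filter.1 hn).2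
          exact ⟨h1, h2, h3, (hCab h2).1, (hCab h3).2⟩
        · intro m hm n hn hmn
          obtain ⟨h1, h2, h3, h4, h5⟩ := hprop n (Finset.mem_filter.1 hn).2
          obtain ⟨g1, g2, g3, g4, g5⟩ := hprop m (Finset.mem_filter.1 hm).2
          obtain ⟨x, hx⟩ := (Finset.mem_filter.1 hn).2
          obtain ⟨y, hy⟩ := (Finset.mem_filter.1 hm).2
          rcases gap_order (hy.2.1.trans hy.2.2) (hx.2.1.trans hx.2.2) (hdisj hmn) with h | h
          · left; linarith
          · right; linarith
        · have k1 : ∑ n ∈ s.filter (fun n => (En n).Nonempty), (r n - l n)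
              ≤ ∑ n ∈ s.filter (fun n => (En n).Nonempty), (d n - c n) := by
            refine Finset.sum_le_sum fun n hn => ?_
            obtain ⟨h1, h2, h3, h4, h5⟩ := hprop n (Finset.mem_filter.1 hn).2
            linarith
          refine lt_of_le_of_lt k1 ?_
          have k2 := sum_gap_le hcd hdisj hun.subset (s.filter (fun n => (En n).Nonempty))
          have k3 := (k2.trans (measure_mono inter_subset_left)).trans_lt hU
          exact (ENNReal.ofReal_lt_ofReal_iff hδ).1 k3

lemma const_of_zero_deriv {a b : ℝ} {H : ℝ → ℝ} (hc : ContinuousOn H (Icc a b))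
    (hG : ACGStar a b H (Icc a b))
    (hd : ∀ᵐ x ∂(volume.restrict (Icc a b)), HasDerivAt H 0 x) :
    ∀ x ∈ Icc a b, ∀ y ∈ Icc a b, H x = H y := by
  obtain ⟨C, hC, hCU⟩ := hG
  set Z := {x | HasDerivAt H 0 x} with hZ
  have hN : volume (Icc a b \ Z) = 0 := by
    rw [ae_restrict_iff' measurableSet_Icc, ae_iff] at hd
    refine measure_mono_null ?_ hd
    intro x hx hx'
    exact hx.2 (hx' hx.1)
  have h1 : volume (H '' Z) = 0 := by
    apply addHaar_image_eq_zero_of_det_fderivWithin_eq_zero volume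
      (f' := fun _ => ContinuousLinearMap.toSpanSingleton ℝ (0 : ℝ))
    · intro x hx
      have hx' : HasDerivAt H 0 x := hx
      exact hx'.hasFDerivAt.hasFDerivWithinAt (s := Z)
    · intro x hx
      simp [ContinuousLinearMap.det]
  have h2 : volume (H '' (Icc a b \ Z)) = 0 := by
    have : H '' (Icc a b \ Z) ⊆ ⋃ n, H '' (C n \ Z) := by
      rintro _ ⟨x, hx, rfl⟩
      have hx1 := hx.1
      rw [hCU] at hx1
      obtain ⟨n, hn⟩ := mem_iUnion.1 hx1
      exact mem_iUnion.2 ⟨n, x, ⟨hn, hx.2⟩, rfl⟩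
    refine measure_mono_null this (measure_iUnion_null fun n => ?_)
    refine ACStar.lusin hc (hC n).1 (hC n).2.1 (hC n).2.2 sdiff_subset ?_
    exact measure_mono_null (sdiff_subset_sdiff_left (hC n).2.1) hN
  have h3 : volume (H '' (Icc a b)) = 0 := by
    refine measure_mono_null ?_ (measure_union_null h1 h2)
    rw [← image_union]
    apply image_mono
    intro x hx
    by_cases h : x ∈ Z
    · exact Or.inl h
    · exact Or.inr ⟨hx, h⟩
  have hconn : OrdConnected (H '' Icc a b) := (isPreconnected_Icc.image _ hc).ordConnected
  have key : ∀ x ∈ Icc a b, ∀ y ∈ Icc a b, ¬ H x < H y := by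
    intro x hx y hy hlt
    have : Icc (H x) (H y) ⊆ H '' Icc a b := hconn.out ⟨x, hx, rfl⟩ ⟨y, hy, rfl⟩
    have := measure_mono_null this h3
    simp at this
    linarith
  intro x hx y hy
  exact le_antisymm (not_lt.1 (key y hy x hx)) (not_lt.1 (key x hx y hy))

lemma denjoy_unique {a b : ℝ} {f F G : ℝ → ℝ} (hF : HasDenjoyIntegralFn a b f F)
    (hG : HasDenjoyIntegralFn a b f G) : ∀ x ∈ Icc a b, F x = G x := by
  intro x hx
  obtain ⟨f1, f2, ⟨C, hC, hCU⟩, f4⟩ := hF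
  obtain ⟨g1, g2, ⟨C', hC', hCU'⟩, g4⟩ := hG
  have := const_of_zero_deriv (a := a) (b := b) (H := fun x => F x - G x) (f1.sub g1) ?_ ?_
    x hx a ⟨le_rfl, hx.1.trans hx.2⟩
  · simp only [f2, g2] at this
    linarith
  · refine ⟨fun n => C (n.unpair.1) ∩ C' (n.unpair.2), fun n => ⟨?_, ?_, ?_⟩, ?_⟩
    · exact (hC _).1.inter (hC' _).1
    · exact inter_subset_left.trans (hC _).2.1
    · exact ((hC _).2.2.mono inter_subset_left).sub f1 g1 ((hC' _).2.2.mono inter_subset_right)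
    · apply Subset.antisymm
      · intro x hx
        have h1 := hx
        have h2 := hx
        rw [hCU] at h1
        rw [hCU'] at h2
        obtain ⟨m, hm⟩ := mem_iUnion.1 h1
        obtain ⟨n, hn⟩ := mem_iUnion.1 h2
        refine mem_iUnion.2 ⟨Nat.pair m n, ?_⟩
        simp only [Nat.unpair_pair]
        exact ⟨hm, hn⟩
      · exact iUnion_subset fun n => inter_subset_left.trans (hC _).2.1
  · filter_upwards [f4, g4] with y h1 h2
    have := h1.sub h2
    rw [sub_self] at this
    exact this

lemma denjoyIntegral_eq {a b : ℝ} (hab : a ≤ b) {f F : ℝ → ℝ} (hF : HasDenjoyIntegralFn a b f F) :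
    denjoyIntegral a b f = F b := by
  have h : DenjoyIntegrable a b f := ⟨F, hF⟩
  unfold denjoyIntegral
  rw [dif_pos h]
  exact denjoy_unique (Classical.choose_spec h) hF b (right_mem_Icc.2 hab)

lemma HasDenjoyIntegralFn.restrict {a b c d : ℝ} {f F : ℝ → ℝ} (hF : HasDenjoyIntegralFn a b f F)
    (hac : a ≤ c) (hdb : d ≤ b) : HasDenjoyIntegralFn c d f (fun x => F x - F c) := by
  obtain ⟨f1, f2, ⟨C, hC, hCU⟩, f4⟩ := hF
  have hsub : Icc c d ⊆ Icc a b := Icc_subset_Icc hac hdb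
  refine ⟨(f1.mono hsub).sub continuousOn_const, by simp, ⟨fun n => C n ∩ Icc c d, ?_, ?_⟩, ?_⟩
  · intro n
    refine ⟨(hC n).1.inter isClosed_Icc, inter_subset_right, ?_⟩
    exact (((hC n).2.2.mono inter_subset_left).congr_sub (fun x _ y _ => by ring)).shrink hac hdb
  · rw [← iUnion_inter, ← hCU]
    exact (inter_eq_right.2 hsub).symm
  · filter_upwards [ae_mono (Measure.restrict_mono hsub le_rfl) f4] with x hx
    exact hx.sub_const _
/-! ### From local to global -/

lemma exists_pos_le_finset {ι : Type*} (t : Finset ι) (g : ι → ℝ) (hg : ∀ i ∈ t, 0 < g i) :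
    ∃ δ > (0:ℝ), ∀ i ∈ t, δ ≤ g i := by
  induction t using Finset.induction_on with
  | empty => exact ⟨1, one_pos, by simp⟩
  | insert i t hi ih =>
    obtain ⟨δ, hδ, h⟩ := ih fun j hj => hg j (Finset.mem_insert_of_mem hj)
    refine ⟨min δ (g i), lt_min hδ (hg i (Finset.mem_insert_self _ _)), ?_⟩
    intro j hj
    rcases Finset.mem_insert.1 hj with rfl | hj
    · exact min_le_right _ _
    · exact (min_le_left _ _).trans (h j hj)

lemma IsPrePartition.sub_sum {a b : ℝ} {K : Set ℝ} {D D' : Finset (ℝ × ℝ)}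
    (h : IsPrePartition a b K D) (hD : D' ⊆ D) :
    ∑ p ∈ D', (p.2 - p.1) ≤ ∑ p ∈ D, (p.2 - p.1) :=
  Finset.sum_le_sum_of_subset_of_nonneg hD fun _ hp _ => sub_nonneg.2 (h.bounds hp).1

lemma IsPrePartition.len_le {a b : ℝ} {K : Set ℝ} {D : Finset (ℝ × ℝ)}
    (h : IsPrePartition a b K D) {p : ℝ × ℝ} (hp : p ∈ D) :
    p.2 - p.1 ≤ ∑ p ∈ D, (p.2 - p.1) :=
  Finset.single_le_sum (f := fun p : ℝ × ℝ => p.2 - p.1)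
    (fun _ hp => sub_nonneg.2 (h.bounds hp).1) hp

lemma acStar_of_DF_empty {a b : ℝ} {F : ℝ → ℝ} {K : Set ℝ} (hK : IsClosed K)
    (hKab : K ⊆ Icc a b) (h : DF a b F K = ∅) : ACStar a b F K := by
  have hKc : IsCompact K := isCompact_Icc.of_isClosed_subset hK hKab
  have hloc : ∀ x : ℝ, ∃ c d : ℝ, x ∈ K → c < x ∧ x < d ∧ ACStar a b F (Icc c d ∩ K) := by
    intro x
    by_cases hx : x ∈ K
    · have : x ∉ DF a b F K := by rw [h]; exact notMem_empty x
      unfold DF at this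
      simp only [mem_ofPred_eq, not_and, not_forall, not_not] at this
      obtain ⟨c, d, h1, h2, h3⟩ := this hx
      exact ⟨c, d, fun _ => ⟨h1, h2, h3⟩⟩
    · exact ⟨0, 0, fun h => absurd h hx⟩
  choose c d hcd using hloc
  obtain ⟨t, ht, hcov⟩ := hKc.elim_nhds_subcover (fun x => Ioo (c x) (d x))
    (fun x hx => Ioo_mem_nhds (hcd x hx).1 (hcd x hx).2.1)
  obtain ⟨η, hη, hleb⟩ := lebesgue_number_lemma_of_metric (ι := t)
    (c := fun i => Ioo (c i) (d i)) hKc (fun i => isOpen_Ioo) (by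
      intro x hx
      obtain ⟨i, hi, hxi⟩ := mem_iUnion₂.1 (hcov hx)
      exact mem_iUnion.2 ⟨⟨i, hi⟩, hxi⟩)
  intro ε hε
  have hε' : 0 < ε / (t.card + 1) := by positivity
  have hfam : ∀ i : t, ∃ δ > (0:ℝ), ∀ (D : Finset (ℝ × ℝ)),
      (∀ p ∈ D, p.1 ≤ p.2 ∧ p.1 ∈ Icc (c i) (d i) ∩ K ∧ p.2 ∈ Icc (c i) (d i) ∩ K ∧ a ≤ p.1 ∧ p.2 ≤ b) →
      (∀ p ∈ D, ∀ q ∈ D, p ≠ q → p.2 ≤ q.1 ∨ q.2 ≤ p.1) →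
      (∑ p ∈ D, (p.2 - p.1)) < δ → (∑ p ∈ D, osc F (Icc p.1 p.2)) < ε / (t.card + 1) := by
    intro i
    obtain ⟨δ, hδ, H⟩ := (hcd i (ht i i.2)).2.2.family hε'
    exact ⟨δ, hδ, fun D => H _ D Prod.fst Prod.snd⟩
  choose δ hδ H using hfam
  obtain ⟨δ', hδ', hδ'le⟩ := exists_pos_le_finset Finset.univ δ (fun i _ => hδ i)
  refine ⟨min η δ', lt_min hη hδ', fun D hD hlen => ?_⟩
  have hg : ∀ p : ℝ × ℝ, ∃ i : t, p ∈ D → p.1 ∈ Icc (c i) (d i) ∧ p.2 ∈ Icc (c i) (d i) := by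
    intro p
    by_cases hp : p ∈ D
    · obtain ⟨h1, h2, h3, h4, h5⟩ := hD.bounds hp
      obtain ⟨i, hi⟩ := hleb p.1 h2
      have hl := (hD.len_le hp).trans_lt (hlen.trans_le (min_le_left _ _))
      refine ⟨i, fun _ => ⟨Ioo_subset_Icc_self (hi (Metric.mem_ball_self hη)),
        Ioo_subset_Icc_self (hi ?_)⟩⟩
      rw [Metric.mem_ball, Real.dist_eq, abs_of_nonneg (by linarith)]
      exact hl
    · obtain ⟨p0, hp0⟩ := hD.1
      obtain ⟨i, hi⟩ := hleb p0.1 (hD.bounds hp0).2.1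
      exact ⟨i, fun h => absurd h hp⟩
  choose g hg using hg
  rw [← Finset.sum_fiberwise_of_maps_to (s := D) (t := Finset.univ) (g := g)
    (fun _ _ => Finset.mem_univ _)]
  have : ∀ i ∈ (Finset.univ : Finset t), ∑ p ∈ D with g p = i, osc F (Icc p.1 p.2) ≤
      ε / (t.card + 1) := by
    intro i _
    apply le_of_lt
    apply H i
    · intro p hp
      obtain ⟨hp1, rfl⟩ := Finset.mem_filter.1 hp
      obtain ⟨h1, h2, h3, h4, h5⟩ := hD.bounds hp1
      exact ⟨h1, ⟨(hg p hp1).1, h2⟩, ⟨(hg p hp1).2, h3⟩, h4, h5⟩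
    · intro p hp q hq hpq
      exact hD.2.2 (Finset.mem_filter.1 hp).1 (Finset.mem_filter.1 hq).1 hpq
    · exact (hD.sub_sum (Finset.filter_subset _ _)).trans_lt
        (hlen.trans_le ((min_le_right _ _).trans (hδ'le i (Finset.mem_univ _))))
  refine lt_of_le_of_lt (Finset.sum_le_card_nsmul _ _ _ this) ?_
  simp only [Finset.card_univ, Fintype.card_coe, nsmul_eq_mul]
  rw [mul_div_assoc', div_lt_iff₀ (by positivity)]
  nlinarith

lemma integrableOn_of_Df_empty {a b : ℝ} {f : ℝ → ℝ} {K : Set ℝ} (hK : IsClosed K)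
    (hKab : K ⊆ Icc a b) (h : Df f K = ∅) : IntegrableOn f K volume := by
  have hKc : IsCompact K := isCompact_Icc.of_isClosed_subset hK hKab
  refine LocallyIntegrableOn.integrableOn_isCompact (fun x hx => ?_) hKc
  have : x ∉ Df f K := by rw [h]; exact notMem_empty x
  unfold Df at this
  simp only [mem_ofPred_eq, not_and, not_forall, not_not] at this
  obtain ⟨c, d, h1, h2, h3⟩ := this hx
  exact ⟨Icc c d ∩ K, inter_mem (mem_nhdsWithin_of_mem_nhds (Icc_mem_nhds h1 h2))
    self_mem_nhdsWithin, h3⟩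

lemma DfF_empty_of {a b : ℝ} {f F : ℝ → ℝ} {K : Set ℝ} 
    (h1 : IntegrableOn f K volume) (h2 : ACStar a b F K) : DfF a b f F K = ∅ := by
  rw [eq_empty_iff_forall_notMem]
  rintro x (hx | hx)
  · exact hx.2 (x - 1) (x + 1) (by linarith) (by linarith) (h1.mono_set inter_subset_right)
  · exact hx.2 (x - 1) (x + 1) (by linarith) (by linarith) (h2.mono inter_subset_right)

lemma ACStar.insert {a b z : ℝ} {F : ℝ → ℝ} {K : Set ℝ} (hK : IsClosed K)
    (h : ACStar a b F K) : ACStar a b F (insert z K) := by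
  by_cases hz : z ∈ K
  · rwa [insert_eq_of_mem hz]
  obtain ⟨η, hη, hball⟩ := Metric.isOpen_iff.1 hK.isOpen_compl z hz
  intro ε hε
  obtain ⟨δ, hδ, H⟩ := h.family hε
  refine ⟨min δ η, lt_min hδ hη, fun D hD hlen => ?_⟩
  have key : ∀ p ∈ D, (p.1 ∈ K ∧ p.2 ∈ K) ∨ p.1 = p.2 := by
    intro p hp
    obtain ⟨h1, h2, h3, h4, h5⟩ := hD.bounds hp
    have hl := (hD.len_le hp).trans_lt (hlen.trans_le (min_le_right _ _))
    rcases h2 with h2 | h2 <;> rcases h3 with h3 | h3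
    · right; rw [h2, h3]
    · exfalso
      refine hball ?_ h3
      rw [Metric.mem_ball, Real.dist_eq, ← h2, abs_of_nonneg (by linarith)]
      exact hl
    · exfalso
      refine hball ?_ h2
      rw [Metric.mem_ball, dist_comm, Real.dist_eq, ← h3, abs_of_nonneg (by linarith)]
      exact hl
    · exact Or.inl ⟨h2, h3⟩
  have e : ∑ p ∈ D, osc F (Icc p.1 p.2) =
      ∑ p ∈ D.filter (fun p => p.1 ∈ K ∧ p.2 ∈ K), osc F (Icc p.1 p.2) := by
    rw [Finset.sum_filter_of_ne]
    intro p hp hne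
    rcases key p hp with h | h
    · exact h
    · rw [h, osc_self] at hne
      exact absurd rfl hne
  rw [e]
  apply H _ _ Prod.fst Prod.snd
  · intro p hp
    obtain ⟨hp1, hp2⟩ := Finset.mem_filter.1 hp
    obtain ⟨h1, h2, h3, h4, h5⟩ := hD.bounds hp1
    exact ⟨h1, hp2.1, hp2.2, h4, h5⟩
  · intro p hp q hq hpq
    exact hD.2.2 (Finset.mem_filter.1 hp).1 (Finset.mem_filter.1 hq).1 hpq
  · exact (hD.sub_sum (Finset.filter_subset _ _)).trans_lt (hlen.trans_le (min_le_left _ _))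

/-! ### The Lebesgue case -/

lemma sum_integral_le {a b : ℝ} {K : Set ℝ} {D : Finset (ℝ × ℝ)}
    (hD : IsPrePartition a b K D) {s : Set ℝ} (hs : s = ⋃ p ∈ D, Ioo p.1 p.2) (μ : Measure ℝ) :
    μ s = ∑ p ∈ D, μ (Ioo p.1 p.2) := by
  rw [hs, measure_biUnion_finset]
  · intro p hp q hq hpq
    rcases hD.2.2 hp hq hpq with h | h
    · exact Set.disjoint_left.2 fun x hx hy => absurd (hx.2.trans_le h) (not_lt.2 hy.1.le)
    · exact Set.disjoint_left.2 fun x hx hy => absurd (hy.2.trans_le h) (not_lt.2 hx.1.le)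
  · intro p _; exact measurableSet_Ioo

lemma acStar_of_integrable {a b : ℝ} (hab : a ≤ b) {f F : ℝ → ℝ}
    (hf : IntegrableOn f (Icc a b) volume)
    (hF : HasDenjoyIntegralFn a b f F) : ACStar a b F (Icc a b) := by
  set G : ℝ → ℝ := fun x => ∫ t in a..x, f t with hG
  have hii : ∀ p q, a ≤ p → p ≤ q → q ≤ b → IntervalIntegrable f volume p q := by
    intro p q h1 h2 h3
    rw [intervalIntegrable_iff_integrableOn_Icc_of_le h2]
    exact hf.mono_set (Icc_subset_Icc h1 h3)
  have hfin : ∫⁻ x in Icc a b, ‖f x‖ₑ ≠ ⊤ := hf.2.ne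
  have hosc : ∀ p q, a ≤ p → p ≤ q → q ≤ b →
      ENNReal.ofReal (osc G (Icc p q)) ≤ ∫⁻ x in Ioo p q, ‖f x‖ₑ ∂(volume.restrict (Icc a b)) := by
    intro p q h1 h2 h3
    have hss : Ioo p q ⊆ Icc a b := Ioo_subset_Icc_self.trans (Icc_subset_Icc h1 h3)
    rw [Measure.restrict_restrict measurableSet_Ioo, inter_eq_left.2 hss]
    have hfin' : ∫⁻ x in Ioo p q, ‖f x‖ₑ ≠ ⊤ := (hf.mono_set hss).2.ne
    apply ENNReal.ofReal_le_of_le_toReal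
    apply osc_le ENNReal.toReal_nonneg
    have key : ∀ x ∈ Icc p q, ∀ y ∈ Icc p q, x ≤ y →
        |G y - G x| ≤ (∫⁻ x in Ioo p q, ‖f x‖ₑ).toReal := by
      intro x hx y hy hxy
      have e : G y - G x = ∫ t in x..y, f t := by
        rw [hG]
        exact intervalIntegral.integral_interval_sub_left
          (hii a y le_rfl (h1.trans hy.1) (hy.2.trans h3))
          (hii a x le_rfl (h1.trans hx.1) (hx.2.trans h3))
      rw [e, intervalIntegral.integral_of_le hxy, integral_Ioc_eq_integral_Ioo, ← Real.norm_eq_abs]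
      rw [← toReal_enorm]
      apply ENNReal.toReal_mono hfin'
      refine (enorm_integral_le_lintegral_enorm _).trans ?_
      exact lintegral_mono_set (Ioo_subset_Ioo hx.1 hy.2)
    intro x hx y hy
    rcases le_total x y with h | h
    · rw [abs_sub_comm]; exact key x hx y hy h
    · exact key y hy x hx h
  have hGc : ContinuousOn G (Icc a b) := by
    have := intervalIntegral.continuousOn_primitive_interval (μ := volume) (f := f) (a := a) (b := b)
      (by rwa [uIcc_of_le hab])
    rwa [uIcc_of_le hab] at this
  have hAC : ACStar a b G (Icc a b) := by
    intro ε hε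
    obtain ⟨δ, hδ, H⟩ := exists_pos_setLIntegral_lt_of_measure_lt (μ := volume.restrict (Icc a b))
      hfin (ε := ENNReal.ofReal ε) (ENNReal.ofReal_pos.2 hε).ne'
    have hδ1 : ∃ δ' > (0:ℝ), ENNReal.ofReal δ' ≤ δ := by
      by_cases ht : δ = ⊤
      · exact ⟨1, one_pos, by rw [ht]; exact le_top⟩
      · exact ⟨δ.toReal, ENNReal.toReal_pos hδ.ne' ht, by rw [ENNReal.ofReal_toReal ht]⟩
    obtain ⟨δ', hδ', hle⟩ := hδ1
    refine ⟨δ', hδ', fun D hD hlen => ?_⟩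
    set s := ⋃ p ∈ D, Ioo p.1 p.2 with hs
    have hsm : MeasurableSet s := Finset.measurableSet_biUnion _ fun p _ => measurableSet_Ioo
    have h1 : volume s < ENNReal.ofReal δ' := by
      rw [sum_integral_le hD hs]
      simp only [Real.volume_Ioo]
      rw [← ENNReal.ofReal_sum_of_nonneg fun p hp => sub_nonneg.2 (hD.bounds hp).1]
      exact (ENNReal.ofReal_lt_ofReal_iff hδ').2 hlen
    have h2 := H s (((Measure.restrict_apply_le _ _).trans_lt h1).trans_le hle)
    have h3 : ∫⁻ x in s, ‖f x‖ₑ ∂(volume.restrict (Icc a b)) =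
        ∑ p ∈ D, ∫⁻ x in Ioo p.1 p.2, ‖f x‖ₑ ∂(volume.restrict (Icc a b)) := by
      have := sum_integral_le hD hs ((volume.restrict (Icc a b)).withDensity fun x => ‖f x‖ₑ)
      rw [withDensity_apply _ hsm] at this
      rw [this]
      refine Finset.sum_congr rfl fun p _ => ?_
      rw [withDensity_apply _ measurableSet_Ioo]
    rw [h3] at h2
    have h4 : ENNReal.ofReal (∑ p ∈ D, osc G (Icc p.1 p.2)) < ENNReal.ofReal ε := by
      rw [ENNReal.ofReal_sum_of_nonneg fun p _ => osc_nonneg _ _]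
      refine lt_of_le_of_lt (Finset.sum_le_sum fun p hp => ?_) h2
      obtain ⟨h1, -, -, h4, h5⟩ := hD.bounds hp
      exact hosc _ _ h4 h1 h5
    exact (ENNReal.ofReal_lt_ofReal_iff hε).1 h4
  have hGD : HasDenjoyIntegralFn a b f G := by
    refine ⟨hGc, by simp [hG], ⟨fun _ => Icc a b, fun _ => ⟨isClosed_Icc, Subset.rfl, hAC⟩, ?_⟩, ?_⟩
    · rw [iUnion_const]
    · have := (hii a b le_rfl hab le_rfl).ae_hasDerivAt_integral
      rw [ae_restrict_iff' measurableSet_Icc]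
      filter_upwards [this] with x hx hxab
      rw [uIcc_of_le hab] at hx
      exact hx hxab a (left_mem_Icc.2 hab)
  have hu := denjoy_unique hF hGD
  exact hAC.congr_sub fun x hx y hy => by rw [hu x hx, hu y hy]
/-! ### Refining closed sets -/

/-- Total weight of the pieces contained in `[p,q]`. -/
def pieceSum {ι : Type} (l r w : ι → ℝ) (p q : ℝ) : ℝ :=
  ∑' i, if p ≤ l i ∧ r i ≤ q then w i else 0

lemma pieceSum_summable {ι : Type} {l r w : ι → ℝ} (hw0 : ∀ i, 0 ≤ w i) (hw : Summable w)
    (p q : ℝ) : Summable fun i => if p ≤ l i ∧ r i ≤ q then w i else 0 := by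
  refine Summable.of_nonneg_of_le (fun i => ?_) (fun i => ?_) hw
  · split_ifs
    · exact hw0 i
    · exact le_rfl
  · split_ifs
    · exact le_rfl
    · exact hw0 i

lemma le_pieceSum {ι : Type} {l r w : ι → ℝ} (hw0 : ∀ i, 0 ≤ w i) (hw : Summable w)
    {p q : ℝ} {i : ι} (h1 : p ≤ l i) (h2 : r i ≤ q) : w i ≤ pieceSum l r w p q := by
  have := (pieceSum_summable (l := l) (r := r) hw0 hw p q).le_tsum i (fun j _ => by
    split_ifs
    · exact hw0 j
    · exact le_rfl)
  rw [if_pos ⟨h1, h2⟩] at this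
  exact this

lemma pieceSum_nonneg {ι : Type} {l r w : ι → ℝ} (hw0 : ∀ i, 0 ≤ w i) (p q : ℝ) :
    0 ≤ pieceSum l r w p q := by
  refine tsum_nonneg fun i => ?_
  split_ifs
  · exact hw0 i
  · exact le_rfl

lemma sum_pieceSum {ι : Type} {l r w : ι → ℝ} (hw0 : ∀ i, 0 ≤ w i) (hw : Summable w)
    (D : Finset (ℝ × ℝ)) :
    Summable (fun i => ∑ p ∈ D, if p.1 ≤ l i ∧ r i ≤ p.2 then w i else 0) ∧
    ∑ p ∈ D, pieceSum l r w p.1 p.2 =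
      ∑' i, ∑ p ∈ D, if p.1 ≤ l i ∧ r i ≤ p.2 then w i else 0 := by
  have hs : ∀ p : ℝ × ℝ, Summable fun i => if p.1 ≤ l i ∧ r i ≤ p.2 then w i else 0 :=
    fun p => pieceSum_summable hw0 hw p.1 p.2
  have key : HasSum (fun i => ∑ p ∈ D, if p.1 ≤ l i ∧ r i ≤ p.2 then w i else 0)
      (∑ p ∈ D, pieceSum l r w p.1 p.2) := hasSum_sum fun p _ => (hs p).hasSum
  exact ⟨key.summable, key.tsum_eq.symm⟩

lemma acStar_charge {a b : ℝ} {F : ℝ → ℝ} {E K : Set ℝ} (hE : ACStar a b F E)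
    {ι : Type} {l r w : ι → ℝ} (hw0 : ∀ i, 0 ≤ w i) (hw : Summable w)
    (hlr : ∀ i, 0 < w i → l i < r i)
    (hch : ∀ p ∈ K, ∀ q ∈ K, p < q → a ≤ p → q ≤ b →
      osc F (Icc p q) ≤ 2 * pieceSum l r w p q ∨
      ∃ p' ∈ E, ∃ q' ∈ E, p ≤ p' ∧ p' ≤ q' ∧ q' ≤ q ∧
        osc F (Icc p q) ≤ osc F (Icc p' q') + 2 * pieceSum l r w p q) :
    ACStar a b F K := by
  intro ε hε
  obtain ⟨δ₁, hδ₁, H⟩ := hE.family (half_pos hε)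
  obtain ⟨t, ht⟩ : ∃ t : Finset ι, ∑' i, w i - ε / 8 < ∑ i ∈ t, w i := by
    have := hw.hasSum.eventually (lt_mem_nhds (by linarith : ∑' i, w i - ε / 8 < ∑' i, w i))
    exact this.exists
  obtain ⟨δ₂, hδ₂, hle⟩ := exists_pos_le_finset t (fun i => if 0 < w i then r i - l i else 1) (by
    intro i _
    split_ifs with h
    · linarith [hlr i h]
    · exact one_pos)
  refine ⟨min δ₁ δ₂, lt_min hδ₁ hδ₂, fun D hD hlen => ?_⟩
  set u : ι → ℝ := fun i => if i ∈ t then 0 else w i with hu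
  have hus : Summable u := by
    refine Summable.of_nonneg_of_le (fun i => ?_) (fun i => ?_) hw
    · simp only [hu]; split_ifs
      · exact le_rfl
      · exact hw0 i
    · simp only [hu]; split_ifs
      · exact hw0 i
      · exact le_rfl
  have hut : ∑' i, u i < ε / 8 := by
    have h1 : HasSum (fun i => if i ∈ t then w i else 0) (∑ i ∈ t, w i) := by
      have := hasSum_sum_of_ne_finset_zero (L := .unconditional ι)
        (f := fun i => if i ∈ t then w i else 0) (s := t)
        (fun i hi => by simp [hi])
      convert this using 1
      exact Finset.sum_congr rfl fun i hi => by simp [hi]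
    have h2 := hw.hasSum.sub h1
    have h3 : (fun i => w i - if i ∈ t then w i else 0) = u := by
      funext i
      simp only [hu]
      split_ifs <;> simp
    rw [h3] at h2
    rw [h2.tsum_eq]
    linarith
  have hsumN : ∑ p ∈ D, pieceSum l r w p.1 p.2 ≤ ∑' i, u i := by
    obtain ⟨hS1, hS2⟩ := sum_pieceSum (l := l) (r := r) hw0 hw D
    rw [hS2]
    refine Summable.tsum_le_tsum (fun i => ?_) hS1 hus
    rcases (hw0 i).eq_or_lt with h0 | h0
    · simp [hu, ← h0]
    have hlri := hlr i h0
    rw [← Finset.sum_filter, Finset.sum_const]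
    simp only [hu]
    split_ifs with hit
    · rw [Finset.filter_false_of_mem]
      · simp
      · rintro p hp ⟨h1, h2⟩
        have h3 := hle i hit
        simp only [h0, if_true] at h3
        have h4 := (hD.len_le hp).trans_lt (hlen.trans_le (min_le_right _ _))
        linarith
    · have hc : (D.filter fun p => p.1 ≤ l i ∧ r i ≤ p.2).card ≤ 1 := by
        rw [Finset.card_le_one]
        intro p hp q hq
        by_contra hpq
        obtain ⟨hp1, hp2, hp3⟩ := Finset.mem_filter.1 hp
        obtain ⟨hq1, hq2, hq3⟩ := Finset.mem_filter.1 hq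
        rcases hD.2.2 hp1 hq1 hpq with h | h <;> linarith
      rw [nsmul_eq_mul]
      have : (((D.filter fun p => p.1 ≤ l i ∧ r i ≤ p.2).card : ℕ) : ℝ) ≤ 1 := by exact_mod_cast hc
      nlinarith
  have hch' : ∀ p : ℝ × ℝ, ∃ e : ℝ × ℝ, p ∈ D →
      osc F (Icc p.1 p.2) ≤ 2 * pieceSum l r w p.1 p.2 ∨
      (e.1 ∈ E ∧ e.2 ∈ E ∧ p.1 ≤ e.1 ∧ e.1 ≤ e.2 ∧ e.2 ≤ p.2 ∧
        osc F (Icc p.1 p.2) ≤ osc F (Icc e.1 e.2) + 2 * pieceSum l r w p.1 p.2) := by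
    intro p
    by_cases hp : p ∈ D
    · obtain ⟨h1, h2, h3, h4, h5⟩ := hD.bounds hp
      rcases h1.eq_or_lt with h | h
      · refine ⟨p, fun _ => Or.inl ?_⟩
        rw [← h, osc_self]
        exact mul_nonneg zero_le_two (pieceSum_nonneg hw0 _ _)
      · rcases hch _ h2 _ h3 h h4 h5 with h | ⟨p', hp', q', hq', g1, g2, g3, g4⟩
        · exact ⟨p, fun _ => Or.inl h⟩
        · exact ⟨(p', q'), fun _ => Or.inr ⟨hp', hq', g1, g2, g3, g4⟩⟩
    · exact ⟨p, fun h => absurd h hp⟩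
  choose e he using hch'
  set D' := D.filter fun p => ¬ osc F (Icc p.1 p.2) ≤ 2 * pieceSum l r w p.1 p.2 with hD'
  have he' : ∀ p ∈ D', p ∈ D ∧ ((e p).1 ∈ E ∧ (e p).2 ∈ E ∧ p.1 ≤ (e p).1 ∧ (e p).1 ≤ (e p).2 ∧
      (e p).2 ≤ p.2 ∧
        osc F (Icc p.1 p.2) ≤ osc F (Icc (e p).1 (e p).2) + 2 * pieceSum l r w p.1 p.2) := by
    intro p hp
    obtain ⟨hp1, hp2⟩ := Finset.mem_filter.1 hp
    exact ⟨hp1, (he p hp1).resolve_left hp2⟩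
  have hsumE : ∑ p ∈ D', osc F (Icc (e p).1 (e p).2) < ε / 2 := by
    apply H _ D' (fun p => (e p).1) (fun p => (e p).2)
    · intro p hp
      obtain ⟨g0, g1, g2, g3, g4, g5, g6⟩ := he' p hp
      obtain ⟨h1, h2, h3, h4, h5⟩ := hD.bounds g0
      exact ⟨g4, g1, g2, h4.trans g3, g5.trans h5⟩
    · intro p hp q hq hpq
      obtain ⟨g0, g1, g2, g3, g4, g5, g6⟩ := he' p hp
      obtain ⟨k0, k1, k2, k3, k4, k5, k6⟩ := he' q hq
      rcases hD.2.2 g0 k0 hpq with h | h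
      · left; linarith
      · right; linarith
    · refine lt_of_le_of_lt ?_ (hlen.trans_le (min_le_left _ _))
      refine le_trans (Finset.sum_le_sum fun p hp => ?_) (hD.sub_sum (Finset.filter_subset _ _))
      obtain ⟨g0, g1, g2, g3, g4, g5, g6⟩ := he' p hp
      linarith
  have hfin : ∑ p ∈ D, osc F (Icc p.1 p.2) ≤
      ∑ p ∈ D, ((if ¬ osc F (Icc p.1 p.2) ≤ 2 * pieceSum l r w p.1 p.2 then
        osc F (Icc (e p).1 (e p).2) else 0) + 2 * pieceSum l r w p.1 p.2) := by
    refine Finset.sum_le_sum fun p hp => ?_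
    split_ifs with h
    · linarith
    · exact ((he p hp).resolve_left h).2.2.2.2.2
  rw [Finset.sum_add_distrib, ← Finset.sum_filter, ← Finset.mul_sum] at hfin
  linarith

lemma gap_lengths_summable {a b : ℝ} {c d : ℕ → ℝ} (hcd : ∀ n, c n ≤ d n)
    (hdisj : Pairwise fun m n => Disjoint (Ioo (c m) (d m)) (Ioo (c n) (d n)))
    (hU : (⋃ n, Ioo (c n) (d n)) ⊆ Icc a b) : Summable fun n => d n - c n := by
  refine summable_of_sum_le (c := (b - a) ⊔ 0) (fun n => sub_nonneg.2 (hcd n)) fun s => ?_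
  have := sum_gap_le hcd hdisj hU s
  rw [Real.volume_Icc] at this
  by_contra! hh
  rw [max_lt_iff] at hh
  have := (ENNReal.ofReal_le_ofReal_iff' ).1 this
  rcases this with h | h <;> linarith [hh.1, hh.2]

lemma gap_osc_summable {a b : ℝ} {F : ℝ → ℝ} {E : Set ℝ} (hEab : E ⊆ Icc a b)
    (hAC : ACStar a b F E) {c d : ℕ → ℝ} (hcd : ∀ n, c n ≤ d n)
    (hdisj : Pairwise fun m n => Disjoint (Ioo (c m) (d m)) (Ioo (c n) (d n)))
    (hU : (⋃ n, Ioo (c n) (d n)) ⊆ Icc a b) (hend : ∀ n, c n < d n → c n ∈ E ∧ d n ∈ E) :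
    Summable fun n => osc F (Icc (c n) (d n)) := by
  obtain ⟨δ, hδ, H⟩ := hAC.family one_pos
  have hl := gap_lengths_summable hcd hdisj hU
  obtain ⟨t, ht⟩ := summable_iff_vanishing_norm.1 hl δ hδ
  refine summable_of_sum_le (c := ∑ n ∈ t, osc F (Icc (c n) (d n)) + 1) (fun n => osc_nonneg _ _)
    fun s => ?_
  have h1 : ∑ n ∈ s, osc F (Icc (c n) (d n)) ≤ ∑ n ∈ t ∪ (s \ t), osc F (Icc (c n) (d n)) := by
    apply Finset.sum_le_sum_of_subset_of_nonneg
    · intro n hn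
      by_cases h : n ∈ t <;> simp [h, hn]
    · intro n _ _; exact osc_nonneg _ _
  rw [Finset.sum_union Finset.disjoint_sdiff] at h1
  have h2 : ∑ n ∈ s \ t, osc F (Icc (c n) (d n)) =
      ∑ n ∈ (s \ t).filter (fun n => c n < d n), osc F (Icc (c n) (d n)) := by
    rw [Finset.sum_filter_of_ne]
    intro n hn hne
    refine lt_of_le_of_ne (hcd n) fun h => hne ?_
    rw [h, osc_self]
  have h3 : ∑ n ∈ (s \ t).filter (fun n => c n < d n), osc F (Icc (c n) (d n)) < 1 := by
    apply H
    · intro n hn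
      have hn2 := (Finset.mem_filter.1 hn).2
      obtain ⟨e1, e2⟩ := hend n hn2
      exact ⟨hn2.le, e1, e2, (hEab e1).1, (hEab e2).2⟩
    · intro m hm n hn hmn
      exact gap_order (Finset.mem_filter.1 hm).2 (Finset.mem_filter.1 hn).2 (hdisj hmn)
    · refine lt_of_le_of_lt (le_abs_self _) (ht _ ?_)
      exact Finset.disjoint_of_subset_left (Finset.filter_subset _ _) Finset.sdiff_disjoint
  linarith

lemma exists_osc_seq {a b c d : ℝ} {F : ℝ → ℝ} (hFc : ContinuousOn F (Icc a b)) (hac : a ≤ c)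
    (hcd : c < d) (hdb : d ≤ b) : ∃ x : ℕ → ℝ, StrictAnti x ∧ x 0 = d ∧ (∀ k, c < x k) ∧
      Tendsto x atTop (nhds c) ∧
      ∀ k, osc F (Icc c (x (k+1))) ≤ (1/2)^k * (d - c) := by
  obtain ⟨u, hu1, hu2, hu3⟩ := exists_seq_strictAnti_tendsto' hcd
  have hev : ∀ n : ℕ, ∀ᶠ k in atTop, osc F (Icc c (u k)) ≤ (1/2)^n * (d - c) := by
    intro n
    set ε := (1/2 : ℝ)^n * (d - c) with hε
    have hεp : 0 < ε := mul_pos (by positivity) (by linarith)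
    have hcc := hFc c ⟨hac, hcd.le.trans hdb⟩
    rw [Metric.continuousWithinAt_iff] at hcc
    obtain ⟨η, hη, hh⟩ := hcc (ε/2) (half_pos hεp)
    have : ∀ᶠ k in atTop, u k < c + η := hu3.eventually (gt_mem_nhds (by linarith))
    filter_upwards [this] with k hk
    apply osc_le hεp.le
    have key : ∀ x ∈ Icc c (u k), |F x - F c| < ε / 2 := by
      intro x hx
      have := @hh x ⟨hac.trans hx.1, (hx.2.trans (hu2 k).2.le).trans hdb⟩ (by
        rw [Real.dist_eq, abs_of_nonneg (by linarith [hx.1])]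
        linarith [hx.2])
      rwa [Real.dist_eq] at this
    intro x hx y hy
    have h1 := key x hx
    have h2 := key y hy
    have h3 := abs_sub_le (F x) (F c) (F y)
    rw [abs_sub_comm (F c)] at h3
    linarith
  obtain ⟨φ, hφ, hP⟩ := extraction_forall_of_eventually hev
  refine ⟨fun k => Nat.casesOn k d (fun k => u (φ k)), ?_, rfl, ?_, ?_, hP⟩
  · apply strictAnti_nat_of_succ_lt
    intro k
    cases k with
    | zero => exact (hu2 _).2
    | succ k => exact hu1 (hφ (Nat.lt_succ_self k))
  · intro k
    cases k with
    | zero => exact hcd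
    | succ k => exact (hu2 _).1
  · rw [← tendsto_add_atTop_iff_nat 1]
    exact hu3.comp hφ.tendsto_atTop

lemma step_left {a b : ℝ} {F : ℝ → ℝ} {E : Set ℝ} (hFc : ContinuousOn F (Icc a b))
    (hEc : IsClosed E) (hEab : E ⊆ Icc a b) (ha : a ∈ E) (hb : b ∈ E) (hAC : ACStar a b F E) :
    ∃ K : Set ℝ, IsClosed K ∧ E ⊆ K ∧ K ⊆ Icc a b ∧ ACStar a b F K ∧ (K \ E).Countable ∧
      ∀ u ∈ E, u < b → ∀ v > u, (K ∩ Ioo u v).Nonempty := by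
  have hUo : IsOpen (Ioo a b \ E) := isOpen_Ioo.sdiff hEc
  have hUab : Ioo a b \ E ⊆ Icc a b := sdiff_subset.trans Ioo_subset_Icc_self
  obtain ⟨c, d, hcd, hdisj, hun, hend'⟩ := exists_gaps hUo hUab
  have hgap : ∀ n, Ioo (c n) (d n) ⊆ Ioo a b \ E := fun n => hun ▸ subset_iUnion (fun n => Ioo (c n) (d n)) n
  have hbd : ∀ n, c n < d n → a ≤ c n ∧ d n ≤ b := by
    intro n hn
    exact (Ioo_subset_Ioo_iff hn).1 ((hgap n).trans sdiff_subset)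
  have hend : ∀ n, c n < d n → c n ∈ E ∧ d n ∈ E := by
    intro n hn
    obtain ⟨h1, h2⟩ := hend' n hn
    obtain ⟨h3, h4⟩ := hbd n hn
    constructor
    · by_contra hh
      rcases h3.eq_or_lt with h | h
      · rw [← h] at hh; exact hh ha
      · exact h1 ⟨⟨h, hn.trans_le h4⟩, hh⟩
    · by_contra hh
      rcases h4.eq_or_lt with h | h
      · rw [h] at hh; exact hh hb
      · exact h2 ⟨⟨h3.trans_lt hn, h⟩, hh⟩
  have hseq : ∀ n, ∃ x : ℕ → ℝ, c n < d n → (StrictAnti x ∧ x 0 = d n ∧ (∀ k, c n < x k) ∧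
      Tendsto x atTop (nhds (c n)) ∧
      ∀ k, osc F (Icc (c n) (x (k+1))) ≤ (1/2)^k * (d n - c n)) := by
    intro n
    by_cases hn : c n < d n
    · obtain ⟨x, hx⟩ := exists_osc_seq hFc (hbd n hn).1 hn (hbd n hn).2
      exact ⟨x, fun _ => hx⟩
    · exact ⟨fun _ => 0, fun h => absurd h hn⟩
  choose x hx using hseq
  set B : ℕ → ℝ := fun n => osc F (Icc (c n) (d n)) + 2 * (d n - c n) with hB
  have hB0 : ∀ n, 0 ≤ B n := fun n => add_nonneg (osc_nonneg _ _)
    (mul_nonneg zero_le_two (sub_nonneg.2 (hcd n)))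
  have hBs : Summable B := (gap_osc_summable hEab hAC hcd hdisj (hun ▸ hUab) hend).add
    ((gap_lengths_summable hcd hdisj (hun ▸ hUab)).mul_left 2)
  set w : ℕ × ℕ → ℝ := fun i => B i.1 * (1/2 : ℝ) ^ i.2 with hw
  have hw0 : ∀ i, 0 ≤ w i := fun i => mul_nonneg (hB0 _) (by positivity)
  have hws : Summable w := hBs.mul_of_nonneg summable_geometric_two hB0 (fun k => by positivity)
  have hxd : ∀ n, c n < d n → ∀ k, x n k ≤ d n := by
    intro n hn k
    rw [← (hx n hn).2.1]
    exact (hx n hn).1.antitone (Nat.zero_le k)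
  have hosc : ∀ n, c n < d n → ∀ k, osc F (Icc (c n) (x n k)) ≤ w (n, k) := by
    intro n hn k
    have n1 := osc_nonneg F (Icc (c n) (d n))
    cases k with
    | zero =>
      rw [(hx n hn).2.1]
      simp only [hw, hB, pow_zero, mul_one]
      linarith
    | succ k =>
      refine ((hx n hn).2.2.2.2 k).trans ?_
      simp only [hw, hB, pow_succ]
      have : (0:ℝ) ≤ (1/2)^k := by positivity
      nlinarith [mul_nonneg n1 this]
  set l : ℕ × ℕ → ℝ := fun i => x i.1 (i.2 + 1) with hl
  set r : ℕ × ℕ → ℝ := fun i => x i.1 i.2 with hr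
  have hwpos : ∀ i, 0 < w i → c i.1 < d i.1 := by
    intro i hi
    refine lt_of_le_of_ne (hcd _) fun h => ?_
    simp only [hw, hB, h, osc_self, sub_self] at hi
    simp at hi
  have hpiece : ∀ n, c n < d n → ∀ k, Ioo (x n (k+1)) (x n k) ⊆ Ioo (c n) (d n) := fun n hn k =>
    Ioo_subset_Ioo ((hx n hn).2.2.1 _).le (hxd n hn k)
  set O : Set ℝ := ⋃ (n : ℕ) (_ : c n < d n) (k : ℕ), Ioo (x n (k+1)) (x n k) with hO
  have hOo : IsOpen O := isOpen_iUnion fun n => isOpen_iUnion fun _ => isOpen_iUnion fun k => isOpen_Ioo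
  have hmemO : ∀ y, y ∈ O ↔ ∃ n, c n < d n ∧ ∃ k, y ∈ Ioo (x n (k+1)) (x n k) := by
    intro y
    simp [hO]
  set K := Icc a b \ O with hK
  have hEK : E ⊆ K := by
    intro y hy
    refine ⟨hEab hy, fun hyO => ?_⟩
    obtain ⟨n, hn, k, hk⟩ := (hmemO y).1 hyO
    exact (hgap n (hpiece n hn k hk)).2 hy
  have hpt : ∀ y ∈ K, y ∉ E → ∃ n k, c n < d n ∧ y = x n (k+1) := by
    intro y hy hyE
    have hyU : y ∈ Ioo a b \ E := by
      refine ⟨⟨lt_of_le_of_ne hy.1.1 fun h => hyE (h ▸ ha), lt_of_le_of_ne hy.1.2 fun h => hyE (h ▸ hb)⟩, hyE⟩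
    rw [← hun] at hyU
    obtain ⟨n, hn⟩ := mem_iUnion.1 hyU
    have hcdn : c n < d n := hn.1.trans hn.2
    obtain ⟨g1, g2, g3, g4, g5⟩ := hx n hcdn
    have hex : ∃ k, x n k ≤ y := ((g4.eventually (gt_mem_nhds hn.1)).exists).imp fun k hk => le_of_lt hk
    have hf := Nat.find_spec hex
    rcases hfe : Nat.find hex with _ | k
    · rw [hfe, g2] at hf
      exact absurd hn.2 (not_lt.2 hf)
    · rw [hfe] at hf
      have hmin := Nat.find_min hex (m := k) (by omega)
      refine ⟨n, k, hcdn, le_antisymm ?_ hf⟩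
      by_contra! hlt
      exact hy.2 ((hmemO y).2 ⟨n, hcdn, k, hlt, not_le.1 hmin⟩)
  have hxK : ∀ n, c n < d n → ∀ k, x n k ∈ K := by
    intro n hn k
    refine ⟨⟨(hbd n hn).1.trans ((hx n hn).2.2.1 k).le, (hxd n hn k).trans (hbd n hn).2⟩, fun hO => ?_⟩
    obtain ⟨m, hm, j, hj⟩ := (hmemO _).1 hO
    have hmj := hpiece m hm j hj
    rcases eq_or_ne m n with rfl | hmn
    · have h1 := (hx m hm).1.lt_iff_gt.1 hj.1
      have h2 := (hx m hm).1.lt_iff_gt.1 hj.2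
      omega
    · rcases (hxd n hn k).eq_or_lt with h | h
      · rw [h] at hmj
        exact (hgap m hmj).2 (hend n hn).2
      · exact Set.disjoint_left.1 (hdisj hmn) hmj ⟨(hx n hn).2.2.1 k, h⟩
  have hgapE : ∀ n, ∀ y ∈ E, y ≤ c n ∨ d n ≤ y := by
    intro n y hy
    by_contra! hh
    exact (hgap n ⟨hh.1, hh.2⟩).2 hy
  refine ⟨K, isClosed_Icc.sdiff hOo, hEK, sdiff_subset, ?_, ?_, ?_⟩
  · refine acStar_charge hAC (l := l) (r := r) hw0 hws
      (fun i hi => (hx _ (hwpos i hi)).1 (Nat.lt_succ_self _)) ?_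
    intro p hp q hq hpq hap hqb
    -- handling of the left end, once an `E`-point lies to the right
    have hleft : ∀ q' ∈ E, p ≤ q' → q' ≤ q → ∃ p' ∈ E, p ≤ p' ∧ p' ≤ q' ∧
        osc F (Icc p q') ≤ osc F (Icc p' q') + pieceSum l r w p q := by
      intro q' hq' hpq' hq'q
      have hN := pieceSum_nonneg (l := l) (r := r) hw0 p q
      by_cases hpE : p ∈ E
      · exact ⟨p, hpE, le_rfl, hpq', by linarith⟩
      · obtain ⟨m, j, hm, hpm⟩ := hpt p hp hpE
        obtain ⟨g1, g2, g3, g4, g5⟩ := hx m hm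
        have h1 : d m ≤ q' := by
          rcases hgapE m q' hq' with h | h
          · have := g3 (j+1)
            rw [← hpm] at this
            linarith
          · exact h
        have h2 : p ≤ d m := hpm ▸ hxd m hm _
        refine ⟨d m, (hend m hm).2, h2, h1, ?_⟩
        have h3 := osc_add (hFc.mono (Icc_subset_Icc hap (hq'q.trans hqb))) h2 h1
        have h4 : osc F (Icc p (d m)) ≤ osc F (Icc (c m) (d m)) :=
          osc_mono (hFc.mono (Icc_subset_Icc (hbd m hm).1 (hbd m hm).2)) (hpm ▸ (g3 _).le) le_rfl
        have h5 := hosc m hm 0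
        rw [g2] at h5
        have h6 : w (m, 0) ≤ pieceSum l r w p q := by
          refine le_pieceSum hw0 hws ?_ ?_
          · rw [hpm]
            exact g1.antitone (by omega)
          · simp only [hr]
            rw [g2]
            linarith
        linarith
    by_cases hqE : q ∈ E
    · right
      obtain ⟨p', hp', h1, h2, h3⟩ := hleft q hqE hpq.le le_rfl
      have hN := pieceSum_nonneg (l := l) (r := r) hw0 p q
      exact ⟨p', hp', q, hqE, h1, h2, le_rfl, by linarith⟩
    · obtain ⟨n, k, hn, hqn⟩ := hpt q hq hqE
      obtain ⟨g1, g2, g3, g4, g5⟩ := hx n hn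
      have hcq : c n < q := hqn ▸ g3 (k+1)
      have h5 := hosc n hn (k+1)
      rw [← hqn] at h5
      rcases le_or_gt p (c n) with hpc | hpc
      · right
        obtain ⟨p', hp', h1, h2, h3⟩ := hleft (c n) (hend n hn).1 hpc hcq.le
        refine ⟨p', hp', c n, (hend n hn).1, h1, h2, hcq.le, ?_⟩
        have h4 := osc_add (hFc.mono (Icc_subset_Icc hap hqb)) hpc hcq.le
        have h6 : w (n, k+1) ≤ pieceSum l r w p q := by
          refine le_pieceSum hw0 hws ?_ ?_
          · exact hpc.trans (g3 _).le
          · exact hqn.ge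
        linarith
      · left
        have h6 : w (n, k+1) ≤ pieceSum l r w p q := by
          refine le_pieceSum hw0 hws ?_ ?_
          · by_contra! hlt
            exact hp.2 ((hmemO p).2 ⟨n, hn, k+1, hlt, hqn ▸ hpq⟩)
          · exact hqn.ge
        have h7 : osc F (Icc p q) ≤ osc F (Icc (c n) q) :=
          osc_mono (hFc.mono (Icc_subset_Icc (hbd n hn).1 hqb)) hpc.le le_rfl
        have hN := pieceSum_nonneg (l := l) (r := r) hw0 p q
        linarith
  · refine (countable_range fun i : ℕ × ℕ => x i.1 (i.2 + 1)).mono ?_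
    rintro y ⟨hy, hyE⟩
    obtain ⟨n, k, -, h⟩ := hpt y hy hyE
    exact ⟨(n, k), h.symm⟩
  · intro u hu hub v huv
    by_cases hh : (E ∩ Ioo u v).Nonempty
    · exact hh.mono (inter_subset_inter_left _ hEK)
    obtain ⟨y, hy1, hy2⟩ := exists_between (lt_min huv hub)
    have hyE : y ∉ E := fun h => hh ⟨y, h, hy1, hy2.trans_le (min_le_left _ _)⟩
    have hyU : y ∈ Ioo a b \ E := ⟨⟨(hEab hu).1.trans_lt hy1, hy2.trans_le (min_le_right _ _)⟩, hyE⟩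
    rw [← hun] at hyU
    obtain ⟨n, hn⟩ := mem_iUnion.1 hyU
    have hcdn : c n < d n := hn.1.trans hn.2
    have huc : u = c n := by
      rcases hgapE n u hu with h | h
      · refine h.eq_or_lt.resolve_right fun h => hh ⟨c n, (hend n hcdn).1, h, ?_⟩
        exact (hn.1.trans hy2).trans_le (min_le_left _ _)
      · linarith [hn.2]
    obtain ⟨g1, g2, g3, g4, g5⟩ := hx n hcdn
    obtain ⟨k, hk⟩ := (g4.eventually (gt_mem_nhds (huc ▸ huv : c n < v))).exists
    exact ⟨x n k, hxK n hcdn k, huc ▸ g3 k, hk⟩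

lemma ACStar.neg {a b : ℝ} {F : ℝ → ℝ} {K : Set ℝ} (h : ACStar a b F K) :
    ACStar (-b) (-a) (fun x => F (-x)) {x | -x ∈ K} := by
  have hosc : ∀ p q : ℝ, osc (fun x => F (-x)) (Icc p q) = osc F (Icc (-q) (-p)) := by
    intro p q
    unfold osc
    congr 1
    ext e
    constructor
    · rintro ⟨x, hx, y, hy, rfl⟩
      exact ⟨-x, ⟨by linarith [hx.2], by linarith [hx.1]⟩, -y,
        ⟨by linarith [hy.2], by linarith [hy.1]⟩, rfl⟩
    · rintro ⟨x, hx, y, hy, rfl⟩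
      exact ⟨-x, ⟨by linarith [hx.2], by linarith [hx.1]⟩, -y,
        ⟨by linarith [hy.2], by linarith [hy.1]⟩, by simp⟩
  intro ε hε
  obtain ⟨δ, hδ, H⟩ := h.family hε
  refine ⟨δ, hδ, fun D hD hlen => ?_⟩
  simp only [hosc]
  apply H _ D (fun p => -p.2) (fun p => -p.1)
  · intro p hp
    obtain ⟨h1, h2, h3, h4, h5⟩ := hD.bounds hp
    exact ⟨by linarith, h3, h2, by linarith, by linarith⟩
  · intro p hp q hq hpq
    rcases hD.2.2 hp hq hpq with h | h
    · right; linarith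
    · left; linarith
  · refine lt_of_eq_of_lt (Finset.sum_congr rfl fun p _ => ?_) hlen
    ring

lemma step_right {a b : ℝ} {F : ℝ → ℝ} {E : Set ℝ} (hFc : ContinuousOn F (Icc a b))
    (hEc : IsClosed E) (hEab : E ⊆ Icc a b) (ha : a ∈ E) (hb : b ∈ E) (hAC : ACStar a b F E) :
    ∃ K : Set ℝ, IsClosed K ∧ E ⊆ K ∧ K ⊆ Icc a b ∧ ACStar a b F K ∧ (K \ E).Countable ∧
      ∀ v ∈ E, a < v → ∀ u < v, (K ∩ Ioo u v).Nonempty := by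
  obtain ⟨K, h1, h2, h3, h4, h5, h6⟩ := step_left (a := -b) (b := -a) (F := fun x => F (-x))
    (E := {x | -x ∈ E}) (by
      refine hFc.comp continuous_neg.continuousOn ?_
      intro x hx
      exact ⟨by linarith [hx.2], by linarith [hx.1]⟩) (hEc.preimage continuous_neg) (by
      intro x hx
      have := hEab hx
      exact ⟨by linarith [this.2], by linarith [this.1]⟩) (by simpa using hb) (by simpa using ha)
      hAC.neg
  refine ⟨{x | -x ∈ K}, h1.preimage continuous_neg, ?_, ?_, ?_, ?_, ?_⟩
  · intro x hx
    exact h2 (by simpa using hx)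
  · intro x hx
    have := h3 hx
    exact ⟨by linarith [this.2], by linarith [this.1]⟩
  · have := h4.neg
    simpa using this
  · refine (h5.image fun x => -x).mono ?_
    rintro x ⟨hx1, hx2⟩
    exact ⟨-x, ⟨hx1, by simpa using hx2⟩, by simp⟩
  · intro v hv hav u huv
    obtain ⟨y, hy1, hy2⟩ := h6 (-v) (by simpa using hv) (by linarith) (-u) (by linarith)
    exact ⟨-y, by simpa using hy1, by linarith [hy2.2], by linarith [hy2.1]⟩

/-- A refinement of `E` all of whose gaps have closure disjoint from `E`. -/
lemma refine_both {a b : ℝ} {F : ℝ → ℝ} {E : Set ℝ} (hFc : ContinuousOn F (Icc a b))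
    (hEc : IsClosed E) (hEab : E ⊆ Icc a b) (ha : a ∈ E) (hb : b ∈ E) (hAC : ACStar a b F E) :
    ∃ K : Set ℝ, IsClosed K ∧ E ⊆ K ∧ K ⊆ Icc a b ∧ ACStar a b F K ∧ (K \ E).Countable ∧
      ∀ u v, u < v → a ≤ u → v ≤ b → Disjoint (Ioo u v) K → Disjoint (Icc u v) E := by
  obtain ⟨K₁, h1, h2, h3, h4, h5, h6⟩ := step_left hFc hEc hEab ha hb hAC
  obtain ⟨K, g1, g2, g3, g4, g5, g6⟩ := step_right hFc h1 h3 (h2 ha) (h2 hb) h4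
  refine ⟨K, g1, h2.trans g2, g3, g4, ?_, ?_⟩
  · refine (h5.union g5).mono ?_
    rintro x ⟨hx1, hx2⟩
    by_cases h : x ∈ K₁
    · exact Or.inl ⟨h, hx2⟩
    · exact Or.inr ⟨hx1, h⟩
  · intro u v huv hau hvb hd
    rw [Set.disjoint_left] at hd ⊢
    intro x hx hxE
    rcases hx.1.eq_or_lt with h | h
    · subst h
      obtain ⟨y, hy1, hy2⟩ := h6 u hxE (huv.trans_le hvb) v huv
      exact hd hy2 (g2 hy1)
    · rcases hx.2.eq_or_lt with h' | h'
      · subst h'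
        obtain ⟨y, hy1, hy2⟩ := g6 x (h2 hxE) (hau.trans_lt huv) u huv
        exact hd hy2 hy1
      · exact hd ⟨h, h'⟩ (g2 (h2 hxE))

/-! ### Cutting off to a subinterval -/

/-- The function `F` frozen outside `[u,v]`. -/
def clampFn (u v : ℝ) (F : ℝ → ℝ) : ℝ → ℝ := fun x => F (max u (min x v)) - F u

lemma clampFn_of_mem {u v x : ℝ} {F : ℝ → ℝ} (hx : x ∈ Icc u v) :
    clampFn u v F x = F x - F u := by
  unfold clampFn
  rw [min_eq_left hx.2, max_eq_right hx.1]

lemma clampFn_of_le {u v x : ℝ} {F : ℝ → ℝ} (hx : x ≤ u) (huv : u ≤ v) :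
    clampFn u v F x = 0 := by
  unfold clampFn
  rw [min_eq_left (hx.trans huv), max_eq_left hx, sub_self]

lemma clampFn_of_ge {u v x : ℝ} {F : ℝ → ℝ} (hx : v ≤ x) (huv : u ≤ v) :
    clampFn u v F x = F v - F u := by
  unfold clampFn
  rw [min_eq_right hx, max_eq_right huv]

lemma osc_clamp_le {a b u v p q : ℝ} {F : ℝ → ℝ} (hFc : ContinuousOn F (Icc a b))
    (huv : u < v) (hau : a ≤ u) (hvb : v ≤ b)
    (hap : a ≤ p) (hqb : q ≤ b) :
    osc (clampFn u v F) (Icc p q) ≤ osc F (Icc p q) := by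
  refine osc_le (osc_nonneg _ _) fun x hx y hy => ?_
  wlog hxy : x ≤ y generalizing x y
  · rw [abs_sub_comm]
    exact this y hy x hx (le_of_not_ge hxy)
  have hFpq := hFc.mono (Icc_subset_Icc hap hqb)
  rcases le_total y u with h1 | h1
  · rw [clampFn_of_le h1 huv.le, clampFn_of_le (hxy.trans h1) huv.le]
    simpa using osc_nonneg _ _
  rcases le_total v x with h2 | h2
  · rw [clampFn_of_ge h2 huv.le, clampFn_of_ge (h2.trans hxy) huv.le]
    simpa using osc_nonneg _ _
  have key : ∀ z ∈ Icc x y, z ∈ Icc p q := fun z hz => ⟨hx.1.trans hz.1, hz.2.trans hy.2⟩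
  have : clampFn u v F x - clampFn u v F y = F (max u (min x v)) - F (max u (min y v)) := by
    unfold clampFn; ring
  rw [this]
  refine abs_le_osc hFpq (key _ ⟨?_, ?_⟩) (key _ ⟨?_, ?_⟩)
  · rw [min_eq_left h2]; exact le_max_right _ _
  · rw [min_eq_left h2]; exact max_le h1 hxy
  · exact le_max_of_le_right (le_min hxy h2)
  · exact max_le h1 (min_le_left _ _)

lemma clamp_denjoy {a b u v : ℝ} {f F : ℝ → ℝ} (hF : HasDenjoyIntegralFn a b f F)
    (huv : u < v) (hau : a ≤ u) (hvb : v ≤ b) :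
    HasDenjoyIntegralFn a b ((Ioo u v).indicator f) (clampFn u v F) := by
  obtain ⟨f1, f2, ⟨C, hC, hCU⟩, f4⟩ := hF
  refine ⟨?_, clampFn_of_le hau huv.le, ⟨C, fun n => ⟨(hC n).1, (hC n).2.1, ?_⟩, hCU⟩, ?_⟩
  · unfold clampFn
    refine ContinuousOn.sub (f1.comp (by fun_prop) ?_) continuousOn_const
    intro x _
    exact ⟨hau.trans (le_max_left _ _), max_le (huv.le.trans hvb) ((min_le_right _ _).trans hvb)⟩
  · exact (hC n).2.2.mono_osc inter_subset_left fun p q hp _ hq _ _ =>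
      osc_clamp_le f1 huv hau hvb hp hq
  · have hnull : ∀ z : ℝ, ∀ᵐ x ∂(volume.restrict (Icc a b)), x ≠ z := fun z =>
      ae_restrict_of_ae (Measure.ae_ne volume z)
    filter_upwards [f4, hnull u, hnull v] with x hx hxu hxv
    rcases lt_or_gt_of_ne hxu with h1 | h1
    · rw [indicator_of_notMem (fun h => by linarith [h.1])]
      refine (hasDerivAt_const x (0:ℝ)).congr_of_eventuallyEq ?_
      filter_upwards [Iio_mem_nhds h1] with y hy
      exact clampFn_of_le (le_of_lt hy) huv.le
    rcases lt_or_gt_of_ne hxv with h2 | h2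
    · have hxm : x ∈ Ioo u v := ⟨h1, h2⟩
      rw [indicator_of_mem hxm]
      refine (hx.sub_const (F u)).congr_of_eventuallyEq ?_
      filter_upwards [Ioo_mem_nhds h1 h2] with y hy
      exact clampFn_of_mem (Ioo_subset_Icc_self hy)
    · rw [indicator_of_notMem (fun h => by linarith [h.2])]
      refine (hasDerivAt_const x (F v - F u)).congr_of_eventuallyEq ?_
      filter_upwards [Ioi_mem_nhds h2] with y hy
      exact clampFn_of_ge (le_of_lt hy) huv.le

/-! ### Iterated derivatives -/

lemma derivIter_zero (D : Set ℝ → Set ℝ) (K : Set ℝ) : derivIter D K 0 = K := by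
  unfold derivIter
  rw [Ordinal.limitRecOn_zero]

lemma derivIter_succ (D : Set ℝ → Set ℝ) (K : Set ℝ) (α : Ordinal.{0}) :
    derivIter D K (α + 1) = D (derivIter D K α) := by
  unfold derivIter
  rw [Ordinal.limitRecOn_add_one]

lemma derivIter_limit (D : Set ℝ → Set ℝ) (K : Set ℝ) {α : Ordinal.{0}}
    (h : Order.IsSuccLimit α) : derivIter D K α = ⋂ β : Iio α, derivIter D K β.1 := by
  unfold derivIter
  rw [Ordinal.limitRecOn_limit _ _ _ _ h]

lemma derivIter_anti {D : Set ℝ → Set ℝ} (hD : ∀ K, D K ⊆ K) (K : Set ℝ) {α β : Ordinal.{0}}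
    (h : β ≤ α) : derivIter D K α ⊆ derivIter D K β := by
  induction α using Ordinal.limitRecOn with
  | zero => rw [nonpos_iff_eq_zero.1 h]
  | add_one α ih =>
    rcases h.eq_or_lt with h | h
    · rw [h]
    · rw [derivIter_succ]
      exact (hD _).trans (ih (Order.lt_add_one_iff.1 h))
  | limit α hα ih =>
    rcases h.eq_or_lt with h | h
    · rw [h]
    · rw [derivIter_limit D K hα]
      exact iInter_subset (fun γ : Iio α => derivIter D K γ.1) ⟨β, h⟩

lemma derivIter_closed {D : Set ℝ → Set ℝ} (hD : ∀ K, IsClosed K → IsClosed (D K)) {K : Set ℝ}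
    (hK : IsClosed K) (α : Ordinal.{0}) : IsClosed (derivIter D K α) := by
  induction α using Ordinal.limitRecOn with
  | zero => rwa [derivIter_zero]
  | add_one α ih => rw [derivIter_succ]; exact hD _ ih
  | limit α hα ih =>
    rw [derivIter_limit D K hα]
    exact isClosed_iInter fun γ => ih γ.1 γ.2

lemma derivIter_local {D₁ D₂ : Set ℝ → Set ℝ} {I : Set ℝ}
    (h : ∀ K L, K ∩ I ⊆ L → D₁ K ∩ I ⊆ D₂ L) (S : Set ℝ) (α : Ordinal.{0}) :
    derivIter D₁ S α ∩ I ⊆ derivIter D₂ S α := by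
  induction α using Ordinal.limitRecOn with
  | zero => rw [derivIter_zero, derivIter_zero]; exact inter_subset_left
  | add_one α ih => rw [derivIter_succ, derivIter_succ]; exact h _ _ ih
  | limit α hα ih =>
    rw [derivIter_limit _ _ hα, derivIter_limit _ _ hα]
    intro x hx
    refine mem_iInter.2 fun γ => ih γ.1 γ.2 ⟨mem_iInter.1 hx.1 γ, hx.2⟩

lemma DfF_subset (a b : ℝ) (f F : ℝ → ℝ) (K : Set ℝ) : DfF a b f F K ⊆ K := by
  rintro x (hx | hx)
  · exact hx.1
  · exact hx.1

lemma DfF_mono (a b : ℝ) (f F : ℝ → ℝ) {K L : Set ℝ} (h : K ⊆ L) :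
    DfF a b f F K ⊆ DfF a b f F L := by
  rintro x (hx | hx)
  · exact Or.inl ⟨h hx.1, fun c d h1 h2 h3 =>
      hx.2 c d h1 h2 (h3.mono_set (inter_subset_inter_right _ h))⟩
  · exact Or.inr ⟨h hx.1, fun c d h1 h2 h3 =>
      hx.2 c d h1 h2 (h3.mono (inter_subset_inter_right _ h))⟩

lemma isClosed_local {K : Set ℝ} (hK : IsClosed K) (P : ℝ → ℝ → Prop) :
    IsClosed {x ∈ K | ∀ c d : ℝ, c < x → x < d → ¬ P c d} := by
  have : {x ∈ K | ∀ c d : ℝ, c < x → x < d → ¬ P c d} =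
      K \ ⋃ (c : ℝ) (d : ℝ) (_ : P c d), Ioo c d := by
    ext x
    simp only [mem_ofPred_eq, Set.mem_sdiff, mem_iUnion, mem_Ioo, not_exists]
    constructor
    · rintro ⟨h1, h2⟩
      exact ⟨h1, fun c d h3 h4 => h2 c d h4.1 h4.2 h3⟩
    · rintro ⟨h1, h2⟩
      exact ⟨h1, fun c d h3 h4 h5 => h2 c d h5 ⟨h3, h4⟩⟩
  rw [this]
  exact hK.sdiff (isOpen_iUnion fun _ => isOpen_iUnion fun _ => isOpen_iUnion fun _ => isOpen_Ioo)

lemma DfF_closed (a b : ℝ) (f F : ℝ → ℝ) (K : Set ℝ) (hK : IsClosed K) :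
    IsClosed (DfF a b f F K) :=
  (isClosed_local hK fun c d => IntegrableOn f (Icc c d ∩ K) volume).union
    (isClosed_local hK fun c d => ACStar a b F (Icc c d ∩ K))

/-! ### Locality -/

lemma DfF_clamp_le {a b u v : ℝ} {f F : ℝ → ℝ} (hFc : ContinuousOn F (Icc a b))
    (huv : u < v) (hau : a ≤ u) (hvb : v ≤ b) (K : Set ℝ) :
    DfF a b ((Ioo u v).indicator f) (clampFn u v F) K ⊆ DfF a b f F K := by
  rintro x (hx | hx)
  · exact Or.inl ⟨hx.1, fun c d h1 h2 h3 => hx.2 c d h1 h2 (h3.indicator measurableSet_Ioo)⟩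
  · exact Or.inr ⟨hx.1, fun c d h1 h2 h3 => hx.2 c d h1 h2
      (h3.mono_osc inter_subset_left fun p q hp _ hq _ _ => osc_clamp_le hFc huv hau hvb hp hq)⟩

lemma DfF_clamp_sub {a b u v : ℝ} {f F : ℝ → ℝ}
    (huv : u < v) (K : Set ℝ) :
    DfF a b ((Ioo u v).indicator f) (clampFn u v F) K ⊆ Icc u v := by
  intro x hx
  by_contra hxI
  obtain ⟨c, d, h1, h2, hg, hG⟩ : ∃ c d : ℝ, c < x ∧ x < d ∧
      (∀ y ∈ Icc c d, (Ioo u v).indicator f y = 0) ∧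
      (∀ y ∈ Icc c d, ∀ z ∈ Icc c d, clampFn u v F y = clampFn u v F z) := by
    rcases lt_or_ge x u with h | h
    · obtain ⟨d, hd1, hd2⟩ := exists_between h
      refine ⟨x - 1, d, by linarith, hd1, fun y hy => ?_, fun y hy z hz => ?_⟩
      · exact indicator_of_notMem (fun h => by linarith [h.1, hy.2]) _
      · rw [clampFn_of_le (hy.2.trans hd2.le) huv.le, clampFn_of_le (hz.2.trans hd2.le) huv.le]
    · have h' : v < x := by
        by_contra! hh
        exact hxI ⟨h, hh⟩
      obtain ⟨c, hc1, hc2⟩ := exists_between h'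
      refine ⟨c, x + 1, hc2, by linarith, fun y hy => ?_, fun y hy z hz => ?_⟩
      · exact indicator_of_notMem (fun h => by linarith [h.2, hy.1]) _
      · rw [clampFn_of_ge (hc1.le.trans hy.1) huv.le, clampFn_of_ge (hc1.le.trans hz.1) huv.le]
  rcases hx with hx | hx
  · refine hx.2 c d h1 h2 (IntegrableOn.mono_set ?_ (inter_subset_left : _ ⊆ Icc c d))
    exact integrableOn_zero.congr_fun (fun y hy => (hg y hy).symm) measurableSet_Icc
  · refine hx.2 c d h1 h2 fun ε hε => ⟨1, one_pos, fun D hD _ => ?_⟩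
    refine lt_of_le_of_lt (Finset.sum_nonpos fun p hp => ?_) hε
    obtain ⟨-, h4, h5, -⟩ := hD.2.1 p hp
    refine osc_le le_rfl fun y hy z hz => ?_
    rw [hG y ⟨h4.1.1.trans hy.1, hy.2.trans h5.1.2⟩ z ⟨h4.1.1.trans hz.1, hz.2.trans h5.1.2⟩]
    simp

lemma DfF_clamp_ge {a b u v : ℝ} {f F : ℝ → ℝ} (K L : Set ℝ)
    (hKL : K ∩ Ioo u v ⊆ L) :
    DfF a b f F K ∩ Ioo u v ⊆ DfF a b ((Ioo u v).indicator f) (clampFn u v F) L := by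
  rintro x ⟨hx, hxI⟩
  obtain ⟨u', hu1, hu2⟩ := exists_between hxI.1
  obtain ⟨v', hv1, hv2⟩ := exists_between hxI.2
  have hsub : ∀ c d, Icc (max c u') (min d v') ∩ K ⊆ Icc c d ∩ L ∩ Ioo u v := by
    rintro c d y ⟨⟨hy1, hy2⟩, hyK⟩
    obtain ⟨hy3, hy4⟩ := max_le_iff.1 hy1
    obtain ⟨hy5, hy6⟩ := le_min_iff.1 hy2
    have : y ∈ Ioo u v := ⟨hu1.trans_le hy4, hy6.trans_lt hv2⟩
    exact ⟨⟨⟨hy3, hy5⟩, hKL ⟨hyK, this⟩⟩, this⟩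
  rcases hx with hx | hx
  · refine Or.inl ⟨hKL ⟨hx.1, hxI⟩, fun c d h1 h2 h3 => ?_⟩
    refine hx.2 (max c u') (min d v') (max_lt h1 hu2) (lt_min h2 hv1) ?_
    have h4 : IntegrableOn f (Ioo u v ∩ (Icc c d ∩ L)) volume := by
      rwa [IntegrableOn, integrable_indicator_iff measurableSet_Ioo, IntegrableOn,
        Measure.restrict_restrict measurableSet_Ioo] at h3
    refine h4.mono_set ((hsub c d).trans ?_)
    rw [inter_comm]
  · refine Or.inr ⟨hKL ⟨hx.1, hxI⟩, fun c d h1 h2 h3 => ?_⟩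
    refine hx.2 (max c u') (min d v') (max_lt h1 hu2) (lt_min h2 hv1) ?_
    refine h3.mono_osc (inter_subset_left.trans ((hsub c d).trans inter_subset_left)) ?_
    intro p q _ _ _ hp hq
    have hp' := (hsub c d hp).2
    have hq' := (hsub c d hq).2
    refine le_of_eq (osc_congr fun y hy z hz => ?_)
    rw [clampFn_of_mem ⟨hp'.1.le.trans hy.1, hy.2.trans hq'.2.le⟩,
      clampFn_of_mem ⟨hp'.1.le.trans hz.1, hz.2.trans hq'.2.le⟩]
    ring

/-! ### The hierarchy -/

lemma denLevel_zero (a b : ℝ) : DenLevel a b 0 = {f | IntegrableOn f (Icc a b) volume} := by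
  unfold DenLevel
  rw [WellFounded.fix_eq, if_pos rfl]

lemma denLevel_pos (a b : ℝ) {α : Ordinal.{0}} (h : α ≠ 0) :
    DenLevel a b α = StepSet a b (LimSet a b (⋃ β : Iio α, DenLevel a b β.1)) := by
  unfold DenLevel
  rw [WellFounded.fix_eq, if_neg h]

lemma exists_level {D : Set ℝ → Set ℝ} (hD : ∀ K, D K ⊆ K)
    (hDc : ∀ K, IsClosed K → IsClosed (D K)) {S J : Set ℝ} (hS : IsClosed S) (hJ : IsCompact J)
    {α : Ordinal.{0}} (hα : α ≠ 0) (h : J ∩ derivIter D S α = ∅) :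
    ∃ β < α, J ∩ derivIter D S (β + 1) = ∅ := by
  rcases Ordinal.zero_or_succ_or_isSuccLimit α with h0 | ⟨β, hβ⟩ | hl
  · exact absurd h0 hα
  · rw [Order.succ_eq_add_one] at hβ
    subst hβ
    exact ⟨β, Order.lt_add_one_iff.2 le_rfl, h⟩
  · rw [derivIter_limit D S hl] at h
    have : Nonempty (Iio α) := ⟨⟨0, pos_iff_ne_zero.2 hα⟩⟩
    obtain ⟨β, hβ⟩ := hJ.elim_directed_family_closed (fun β : Iio α => derivIter D S β.1)
      (fun β => derivIter_closed hDc hS _) h (by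
        intro β γ
        refine ⟨max β γ, derivIter_anti hD S ?_, derivIter_anti hD S ?_⟩
        · exact (le_max_left β γ : β ≤ max β γ)
        · exact (le_max_right β γ : γ ≤ max β γ))
    refine ⟨β.1, β.2, ?_⟩
    rw [eq_empty_iff_forall_notMem] at hβ ⊢
    intro x hx
    exact hβ x ⟨hx.1, derivIter_anti hD S (Order.lt_add_one_iff.2 le_rfl).le hx.2⟩

lemma mem_limSet_of {a b : ℝ} (hab : a < b) {X : Set (ℝ → ℝ)} {g G : ℝ → ℝ}
    (hG : HasDenjoyIntegralFn a b g G) (hg : (Ioo a b).indicator g = g) (hX : g ∈ X) :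
    g ∈ LimSet a b X := by
  refine ⟨fun _ => a, fun _ => b, fun n => ⟨le_rfl, le_rfl, le_rfl, le_rfl⟩, iUnion_const _,
    fun n _ => by rwa [hg], ⟨G b - G a, ?_⟩, ⟨G b, ?_⟩⟩
  · have hev : ∀ᶠ c in nhdsWithin a (Ioi a), G b - G c = denjoyIntegral c b g := by
      filter_upwards [Ioo_mem_nhdsGT hab] with c hc
      rw [denjoyIntegral_eq hc.2.le (hG.restrict hc.1.le le_rfl)]
    refine Tendsto.congr' hev (tendsto_const_nhds.sub ?_)
    have h1 := hG.1 a (left_mem_Icc.2 hab.le)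
    rw [ContinuousWithinAt, nhdsWithin_Icc_eq_nhdsGE hab] at h1
    exact h1.mono_left (nhdsWithin_mono _ Ioi_subset_Ici_self)
  · have hev : ∀ᶠ c in nhdsWithin b (Iio b), G c = denjoyIntegral a c g := by
      filter_upwards [Ioo_mem_nhdsLT hab] with c hc
      rw [denjoyIntegral_eq hc.1.le (hG.restrict le_rfl hc.2.le), hG.2.1, sub_zero]
    refine Tendsto.congr' hev ?_
    have h1 := hG.1 b (right_mem_Icc.2 hab.le)
    rw [ContinuousWithinAt, nhdsWithin_Icc_eq_nhdsLE hab] at h1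
    exact h1.mono_left (nhdsWithin_mono _ Iio_subset_Iic_self)

lemma integrableOn_countable_extra {f : ℝ → ℝ} {E K : Set ℝ} (h : IntegrableOn f E volume)
    (hc : (K \ E).Countable) : IntegrableOn f K volume := by
  have h1 : IntegrableOn f (K \ E) volume := by
    rw [IntegrableOn, Measure.restrict_eq_zero.2 (hc.measure_zero volume)]
    exact integrable_zero_measure
  refine (h.union h1).mono_set ?_
  intro x hx
  by_cases hE : x ∈ E
  · exact Or.inl hE
  · exact Or.inr ⟨hx, hE⟩

lemma insert_two_data {a b : ℝ} {f F : ℝ → ℝ} {K : Set ℝ} (hK : IsClosed K)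
    (hKi : IntegrableOn f K volume) (hKa : ACStar a b F K) :
    IsClosed (insert a (insert b K)) ∧ IntegrableOn f (insert a (insert b K)) volume ∧
      ACStar a b F (insert a (insert b K)) := by
  have h1 : IsClosed (insert b K) := by
    rw [insert_eq]; exact isClosed_singleton.union hK
  refine ⟨?_, ?_, ACStar.insert h1 (ACStar.insert hK hKa)⟩
  · rw [insert_eq]; exact isClosed_singleton.union h1
  · refine integrableOn_countable_extra hKi (((countable_singleton b).insert a).mono ?_)
    rintro x ⟨hx | hx | hx, hxK⟩
    · exact Or.inl hx
    · exact Or.inr hx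
    · exact absurd hx hxK

lemma main_induction (a b : ℝ) (hab : a < b) (α : Ordinal.{0}) :
    ∀ f F : ℝ → ℝ, HasDenjoyIntegralFn a b f F →
    (derivIter (DfF a b f F) (Icc a b) (α + 1) = ∅ ↔ f ∈ DenLevel a b α) := by
  induction α using WellFoundedLT.induction with
  | ind α IH =>
  intro f F hF
  rcases eq_or_ne α 0 with rfl | hα
  · rw [derivIter_succ, derivIter_zero, denLevel_zero]
    constructor
    · intro h
      exact integrableOn_of_Df_empty isClosed_Icc Subset.rfl (subset_empty_iff.1
        ((subset_union_left : _ ⊆ DfF a b f F (Icc a b)).trans h.subset))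
    · intro h
      exact DfF_empty_of h (acStar_of_integrable hab.le h hF)
  have hsub := DfF_subset a b f F
  have hcl := DfF_closed a b f F
  rw [denLevel_pos a b hα]
  constructor
  · intro h
    rw [derivIter_succ] at h
    set K := derivIter (DfF a b f F) (Icc a b) α with hKdef
    have hK : IsClosed K := derivIter_closed hcl isClosed_Icc α
    have hKab : K ⊆ Icc a b := by
      have := derivIter_anti hsub (Icc a b) (bot_le : (⊥ : Ordinal.{0}) ≤ α)
      rwa [Ordinal.bot_eq_zero, derivIter_zero] at this
    have hKi : IntegrableOn f K volume := integrableOn_of_Df_empty hK hKab (subset_empty_iff.1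
        ((subset_union_left : _ ⊆ DfF a b f F K).trans h.subset))
    have hKa : ACStar a b F K := acStar_of_DF_empty hK hKab (subset_empty_iff.1
        ((subset_union_right : _ ⊆ DfF a b f F K).trans h.subset))
    obtain ⟨hEc, hEi, hEa⟩ := insert_two_data hK hKi hKa
    have hEab : insert a (insert b K) ⊆ Icc a b :=
      insert_subset (left_mem_Icc.2 hab.le) (insert_subset (right_mem_Icc.2 hab.le) hKab)
    obtain ⟨K', k1, k2, k3, k4, k5, k6⟩ := refine_both hF.1 hEc hEab (mem_insert _ _)
      (mem_insert_of_mem _ (mem_insert _ _)) hEa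
    have hUo : IsOpen (Ioo a b \ K') := isOpen_Ioo.sdiff k1
    obtain ⟨c, d, hcd, hdisj, hun, -⟩ := exists_gaps hUo
      (sdiff_subset.trans Ioo_subset_Icc_self)
    refine ⟨K', k1, k3, c, d, hcd, hdisj, hun, integrableOn_countable_extra hEi k5, ?_, F, hF, k4⟩
    intro n hn
    have hgap : Ioo (c n) (d n) ⊆ Ioo a b \ K' :=
      hun ▸ subset_iUnion (fun n => Ioo (c n) (d n)) n
    obtain ⟨hac, hdb⟩ := (Ioo_subset_Ioo_iff hn).1 (hgap.trans sdiff_subset)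
    have hdE := k6 (c n) (d n) hn hac hdb (Set.disjoint_left.2 fun x hx => (hgap hx).2)
    have hdK : Icc (c n) (d n) ∩ K = ∅ := by
      rw [← disjoint_iff_inter_eq_empty]
      exact hdE.mono_right ((subset_insert _ _).trans (subset_insert _ _))
    obtain ⟨β, hβ, hβe⟩ := exists_level hsub hcl isClosed_Icc isCompact_Icc hα hdK
    have hG := clamp_denjoy hF hn hac hdb
    have hmem := (IH β hβ _ _ hG).1 (by
      rw [← subset_empty_iff, ← hβe]
      refine subset_inter ?_ ?_
      · rw [derivIter_succ]
        exact DfF_clamp_sub hn _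
      · have := derivIter_local (I := univ)
          (D₁ := DfF a b ((Ioo (c n) (d n)).indicator f) (clampFn (c n) (d n) F))
          (D₂ := DfF a b f F) (fun K L hKL => by
            rw [inter_univ] at hKL ⊢
            exact (DfF_clamp_le hF.1 hn hac hdb K).trans (DfF_mono a b f F hKL)) (Icc a b) (β + 1)
        rwa [inter_univ] at this)
    refine mem_limSet_of hab hG ?_ (mem_iUnion.2 ⟨⟨β, hβ⟩, hmem⟩)
    rw [indicator_indicator, inter_eq_right.2 (hgap.trans sdiff_subset)]
  · rintro ⟨K, hK, hKab, c, d, hcd, hdisj, hun, hKi, hX, F', hF', hKa'⟩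
    have hKa : ACStar a b F K := hKa'.congr_sub fun x hx y hy => by
      rw [denjoy_unique hF hF' x hx, denjoy_unique hF hF' y hy]
    obtain ⟨hEc, hEi, hEa⟩ := insert_two_data hK hKi hKa
    rw [derivIter_succ, ← subset_empty_iff, ← DfF_empty_of hEi hEa]
    apply DfF_mono
    intro x hx
    by_contra hxE
    simp only [mem_insert_iff, not_or] at hxE
    have hxab : x ∈ Icc a b := by
      have := derivIter_anti hsub (Icc a b) (bot_le : (⊥ : Ordinal.{0}) ≤ α) hx
      rwa [Ordinal.bot_eq_zero, derivIter_zero] at this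
    have hxI : x ∈ Ioo a b := ⟨lt_of_le_of_ne hxab.1 (Ne.symm hxE.1), lt_of_le_of_ne hxab.2 hxE.2.1⟩
    have hxU : x ∈ Ioo a b \ K := ⟨hxI, hxE.2.2⟩
    rw [← hun] at hxU
    obtain ⟨n, hn⟩ := mem_iUnion.1 hxU
    obtain ⟨A, B, hAB, hABu, hABX, -, -⟩ := hX n (hn.1.trans hn.2)
    rw [← hABu] at hxI
    obtain ⟨m, hm⟩ := mem_iUnion.1 hxI
    have hg := hABX m (hm.1.trans hm.2)
    rw [indicator_indicator, Ioo_inter_Ioo] at hg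
    obtain ⟨⟨β, hβ⟩, hgβ⟩ := mem_iUnion.1 hg
    have hxuv : x ∈ Ioo (A m ⊔ c n) (B m ⊓ d n) := ⟨max_lt hm.1 hn.1, lt_min hm.2 hn.2⟩
    have hG := clamp_denjoy hF (hxuv.1.trans hxuv.2) ((hAB m).1.trans (le_max_left _ _))
      ((min_le_left _ _).trans (hAB m).2.1)
    have hemp := (IH β hβ _ _ hG).2 hgβ
    have hxβ := derivIter_anti hsub (Icc a b) (Order.add_one_le_of_lt hβ) hx
    have := derivIter_local (I := Ioo (A m ⊔ c n) (B m ⊓ d n)) (D₁ := DfF a b f F)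
      (D₂ := DfF a b ((Ioo (A m ⊔ c n) (B m ⊓ d n)).indicator f)
        (clampFn (A m ⊔ c n) (B m ⊓ d n) F)) DfF_clamp_ge (Icc a b) (β + 1) ⟨hxβ, hxuv⟩
    rw [hemp] at this
    exact this

/-- Calibration: `D_{f,F}^(α+1)([a,b]) = ∅` iff `f ∈ Den_α[a,b]`. -/
theorem derivIter_empty_iff_denLevel (a b : ℝ) (hab : a < b)
    (α : Ordinal.{0}) (hα : α.card ≤ Cardinal.aleph0)
    (f F : ℝ → ℝ) (hF : HasDenjoyIntegralFn a b f F) :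
    derivIter (DfF a b f F) (Icc a b) (α + 1) = ∅ ↔ f ∈ DenLevel a b α := by
  exact main_induction a b hab α f F hF
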